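/- arXiv:2603.21946 — 4 statements merged into one kernel-verified Lean document; each statement's English description precedes it below -/
import Mathlib

section
/- Let M be a von Neumann algebra acting on a complex Hilbert space H (i.e., a unital *-subalgebra of B(H) equal to its double commutant), and let A ⊆ M be a commutative unital norm-closed *-subalgebra. Suppose there exists a faithful conditional expectation E : M → A. Then A is a von Neumann subalgebra of M; in particular A equals its own double commutant in B(H). -/
/-!
A bounded increasing net of operators converges strongly to its least upper bound `q`. If the net
lies in `A`, then `q ∈ M`, and positivity of `E` makes `E q` an upper bound of the net, so
`q ≤ E q`; since `E (E q - q) = 0`, faithfulness gives `q = E q ∈ A`. Thus `A` is closed under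
bounded monotone limits.

Let `T` be in the double commutant of `A` with `0 ≤ T ≤ 1`. For every vector `ξ` the set
`{a ξ | a ∈ A, 0 ≤ a ≤ 1}` is closed: a limit point is attained at the limit inferior of a fast
converging sequence. By the argument of the double commutant theorem and truncation, `T ξ` lies in
its closure, so some `b ∈ A` with `0 ≤ b ≤ 1` satisfies `b ξ = T ξ`. Agreement at two vectors `ξ`
and `η` reduces to agreement at `ξ + (1 - p) η`, where `p` is the projection onto the closure of
the orbit of `ξ` under the commutant of `A`. Hence the infimum of all such `b` is at most `T` and
still agrees with `T` at `ξ`. Applied to `1 - T`, this shows that `T` is the infimum of the `a ∈ A`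
with `T ≤ a ≤ 1`, so `T ∈ A`.
-/

namespace FaithfulExpectation

open Filter Topology ComplexOrder
open scoped InnerProductSpace Pointwise ComplexStarModule

section RealPart

variable {R : Type*} [Ring R] [StarRing R] [Algebra ℂ R] [StarModule ℂ R]

lemma realPart_mem {A : StarSubalgebra ℂ R} {x : R} (hx : x ∈ A) : (ℜ x : R) ∈ A := by
  rw [realPart_apply_coe, ← Complex.coe_smul]
  exact A.smul_mem (add_mem hx (star_mem hx)) _

lemma imaginaryPart_mem {A : StarSubalgebra ℂ R} {x : R} (hx : x ∈ A) : (ℑ x : R) ∈ A := by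
  rw [imaginaryPart_apply_coe, ← Complex.coe_smul]
  exact A.smul_mem (A.smul_mem (sub_mem hx (star_mem hx)) _) _

end RealPart

section Order

variable {R : Type*} [CStarAlgebra R]

lemma posPart_mem {A : StarSubalgebra ℂ R} (hA : IsClosed (A : Set R)) {x : R} (hx : x ∈ A) :
    x⁺ ∈ A := by
  have : IsClosed (A : Set R) := hA
  rw [CFC.posPart_def]
  exact cfcₙ_mem (𝕜 := ℝ) (𝕜' := ℂ) _ hx

lemma negPart_mem {A : StarSubalgebra ℂ R} (hA : IsClosed (A : Set R)) {x : R} (hx : x ∈ A) :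
    x⁻ ∈ A := by
  rw [← CFC.posPart_neg]
  exact posPart_mem hA (neg_mem hx)

/-- The meet of two self-adjoint elements `x` and `y` in a commutative C⋆-subalgebra containing
both; it is written asymmetrically because this makes sense for arbitrary `x` and `y`. -/
noncomputable def opInf (x y : R) : R := x - (x - y)⁺

variable [PartialOrder R] [StarOrderedRing R]

lemma posPart_le_of_commute {a b : R} (ha : IsSelfAdjoint a) (hab : a ≤ b) (hb : 0 ≤ b)
    (hcomm : Commute a b) : a⁺ ≤ b := by
  have h_nonneg : 0 ≤ 2 • b - a := by
    rw [two_smul, add_sub_assoc]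
    exact add_nonneg hb (sub_nonneg.2 hab)
  have h_sq : star a * a ≤ star (2 • b - a) * (2 • b - a) := by
    have h_diff : (2 • b - a) * (2 • b - a) - a * a = 4 • (b * (b - a)) := by
      simp only [two_smul, sub_mul, mul_sub, add_mul, mul_add, hcomm.eq]
      abel
    rw [ha.star_eq, (IsSelfAdjoint.of_nonneg h_nonneg).star_eq, ← sub_nonneg, h_diff]
    exact nsmul_nonneg
      (((Commute.refl b).sub_right hcomm.symm).mul_nonneg hb (sub_nonneg.2 hab)) 4
  have h_abs : CFC.abs a ≤ 2 • b - a := by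
    rw [← CFC.abs_of_nonneg _ h_nonneg]
    exact CFC.sqrt_le_sqrt _ _ h_sq
  have h_two : (2 : ℝ) • a⁺ ≤ (2 : ℝ) • b := by
    rw [ofNat_smul_eq_nsmul ℝ 2 a⁺, ofNat_smul_eq_nsmul ℝ 2 b, ← CFC.abs_add_self a ha]
    exact le_sub_iff_add_le.1 h_abs
  exact le_of_smul_le_smul_left h_two two_pos

lemma mul_self_le_norm_smul {x : R} (hx : 0 ≤ x) : x * x ≤ ‖x‖ • x := by
  have h_norm : 0 ≤ algebraMap ℝ R ‖x‖ - x :=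
    sub_nonneg.2 (IsSelfAdjoint.of_nonneg hx).le_algebraMap_norm_self
  have h_mul := ((Algebra.commute_algebraMap_left ‖x‖ x).sub_left (Commute.refl x)).mul_nonneg
    h_norm hx
  rwa [sub_mul, ← Algebra.smul_def, sub_nonneg] at h_mul

lemma opInf_le_left (x y : R) : opInf x y ≤ x :=
  sub_le_self x (CFC.posPart_nonneg _)

lemma opInf_le_right {x y : R} (hx : IsSelfAdjoint x) (hy : IsSelfAdjoint y) :
    opInf x y ≤ y :=
  sub_le_comm.1 (CFC.le_posPart (hx.sub hy))

lemma le_opInf {x y z : R} (hx : IsSelfAdjoint x) (hy : IsSelfAdjoint y) (hzx : z ≤ x)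
    (hzy : z ≤ y) (hxy : Commute x y) (hxz : Commute x z) (hyz : Commute y z) :
    z ≤ opInf x y := by
  refine le_sub_comm.1 (posPart_le_of_commute (hx.sub hy) (sub_le_sub_left hzy x)
    (sub_nonneg.2 hzx) ?_)
  exact ((Commute.refl x).sub_right hxz).sub_left (hxy.symm.sub_right hyz)

lemma opInf_mem_Icc {A : StarSubalgebra ℂ R} (hA : IsClosed (A : Set R))
    (hcomm : ∀ a ∈ A, ∀ b ∈ A, Commute a b) {x y : R} (hx : x ∈ (A : Set R) ∩ Set.Icc 0 1)
    (hy : y ∈ (A : Set R) ∩ Set.Icc 0 1) : opInf x y ∈ (A : Set R) ∩ Set.Icc 0 1 :=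
  ⟨sub_mem hx.1 (posPart_mem hA (sub_mem hx.1 hy.1)),
    le_opInf (.of_nonneg hx.2.1) (.of_nonneg hy.2.1) hx.2.1 hy.2.1 (hcomm x hx.1 y hy.1)
      (Commute.zero_right x) (Commute.zero_right y),
    (opInf_le_left x y).trans hx.2.2⟩

lemma isBounded_Icc_zero_one : Bornology.IsBounded (Set.Icc (0 : R) 1) :=
  isBounded_iff_forall_norm_le.2
    ⟨1, fun x hx => (CStarAlgebra.norm_le_one_iff_of_nonneg x hx.1).2 hx.2⟩

lemma le_of_Icc_zero_one_subset {A B : StarSubalgebra ℂ R} (hB : IsClosed (B : Set R))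
    (h : (B : Set R) ∩ Set.Icc 0 1 ⊆ A) : B ≤ A := by
  have h_nonneg : ∀ x ∈ B, 0 ≤ x → x ∈ A := by
    intro x hx hx_nonneg
    rcases eq_or_ne x 0 with rfl | hx_ne
    · exact zero_mem A
    have h_unit : ((‖x‖⁻¹ : ℝ) : ℂ) • x ∈ A := by
      refine h ⟨B.smul_mem hx _, ?_⟩
      rw [Complex.coe_smul]
      have h_pos : 0 ≤ ‖x‖⁻¹ • x := smul_nonneg (by positivity) hx_nonneg
      refine ⟨h_pos, (CStarAlgebra.norm_le_one_iff_of_nonneg _ h_pos).1 ?_⟩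
      rw [norm_smul, norm_inv, norm_norm, inv_mul_cancel₀ (norm_ne_zero_iff.2 hx_ne)]
    have h_scale := A.smul_mem h_unit ((‖x‖ : ℝ) : ℂ)
    rwa [Complex.coe_smul, Complex.coe_smul, smul_inv_smul₀ (norm_ne_zero_iff.2 hx_ne)] at h_scale
  intro x hx
  rw [← CStarAlgebra.linear_combination_nonneg x]
  have h_posPart : ∀ y ∈ B, y⁺ ∈ A := fun y hy =>
    h_nonneg _ (posPart_mem hB hy) (CFC.posPart_nonneg y)
  have h_negPart : ∀ y ∈ B, y⁻ ∈ A := fun y hy =>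
    h_nonneg _ (negPart_mem hB hy) (CFC.negPart_nonneg y)
  exact add_mem (sub_mem (h_posPart _ (realPart_mem hx)) (h_negPart _ (realPart_mem hx)))
    (sub_mem (A.smul_mem (h_posPart _ (imaginaryPart_mem hx)) _)
      (A.smul_mem (h_negPart _ (imaginaryPart_mem hx)) _))

end Order

section Operators

variable {H : Type*} [NormedAddCommGroup H] [InnerProductSpace ℂ H]

lemma le_iff_inner_le {x y : H →L[ℂ] H} : x ≤ y ↔ ∀ ξ, ⟪x ξ, ξ⟫_ℂ ≤ ⟪y ξ, ξ⟫_ℂ := by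
  rw [ContinuousLinearMap.le_def, ContinuousLinearMap.isPositive_iff_complex]
  refine forall_congr' fun ξ => ?_
  rw [sub_apply, inner_sub_left, ← sub_nonneg (a := ⟪y ξ, ξ⟫_ℂ), Complex.nonneg_iff,
    RCLike.re_to_complex, ← Complex.conj_eq_iff_re, Complex.conj_eq_iff_im, eq_comm, and_comm]

variable [CompleteSpace H]

lemma norm_apply_sq (x : H →L[ℂ] H) (ξ : H) : ‖x ξ‖ ^ 2 = (⟪(star x * x) ξ, ξ⟫_ℂ).re :=
  x.apply_norm_sq_eq_inner_adjoint_left ξ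

lemma norm_apply_le_of_star_mul_self_le {x y : H →L[ℂ] H} (h : star x * x ≤ star y * y) (ξ : H) :
    ‖x ξ‖ ≤ ‖y ξ‖ := by
  refine le_of_sq_le_sq ?_ (norm_nonneg _)
  rw [norm_apply_sq, norm_apply_sq]
  exact (Complex.le_def.1 (le_iff_inner_le.1 h ξ)).1

lemma norm_realPart_apply_le (x : H →L[ℂ] H) [IsStarNormal x] (ξ : H) :
    ‖(ℜ x : H →L[ℂ] H) ξ‖ ≤ ‖x ξ‖ := by
  refine norm_apply_le_of_star_mul_self_le ?_ ξ
  rw [star_mul_self_eq_realPart_sq_add_imaginaryPart_sq x, (ℜ x).2.star_eq, ← sq]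
  exact le_add_of_nonneg_right (IsSelfAdjoint.sq_nonneg (ℑ x).2)

lemma norm_posPart_sub_apply_le {a T : H →L[ℂ] H} (ha : IsSelfAdjoint a) (hT : 0 ≤ T)
    (hcomm : Commute a T) (ξ : H) : ‖(a⁺ - T) ξ‖ ≤ ‖(a - T) ξ‖ := by
  refine norm_apply_le_of_star_mul_self_le ?_ ξ
  have hT_sa : IsSelfAdjoint T := .of_nonneg hT
  have h_posPart_sa : IsSelfAdjoint a⁺ := .of_nonneg (CFC.posPart_nonneg a)
  have h_negPart_comm : Commute a⁻ T := by
    rw [CFC.negPart_def]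
    exact hcomm.cfcₙ_real _
  rw [(ha.sub hT_sa).star_eq, (h_posPart_sa.sub hT_sa).star_eq, ← sub_nonneg]
  have h_diff : (a - T) * (a - T) - (a⁺ - T) * (a⁺ - T) = a⁻ * a⁻ + 2 • (a⁻ * T) := by
    nth_rw 1 2 [← CFC.posPart_sub_negPart a ha]
    simp only [two_smul, sub_mul, mul_sub, CFC.posPart_mul_negPart, CFC.negPart_mul_posPart,
      h_negPart_comm.eq]
    abel
  rw [h_diff]
  have h_negPart_nonneg := CFC.negPart_nonneg a
  exact add_nonneg ((Commute.refl _).mul_nonneg h_negPart_nonneg h_negPart_nonneg)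
    (nsmul_nonneg (h_negPart_comm.mul_nonneg h_negPart_nonneg hT) 2)

lemma norm_posPart_apply_le {a : H →L[ℂ] H} (ha : IsSelfAdjoint a) (ξ : H) : ‖a⁺ ξ‖ ≤ ‖a ξ‖ := by
  simpa only [sub_zero] using norm_posPart_sub_apply_le ha le_rfl (Commute.zero_right a) ξ

lemma norm_opInf_one_sub_apply_le {a T : H →L[ℂ] H} (ha : IsSelfAdjoint a) (hT : T ≤ 1)
    (hcomm : Commute a T) (ξ : H) : ‖(opInf 1 a - T) ξ‖ ≤ ‖(a - T) ξ‖ := by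
  have h := norm_posPart_sub_apply_le ((IsSelfAdjoint.one _).sub ha) (sub_nonneg.2 hT)
    (((Commute.one_left _).sub_right (Commute.one_left _)).sub_left
      ((Commute.one_right _).sub_right hcomm)) ξ
  have h_left : (1 - a)⁺ - (1 - T) = -(opInf 1 a - T) := by rw [opInf]; abel
  have h_right : (1 - a) - (1 - T) = -(a - T) := by abel
  rwa [h_left, h_right, neg_apply, neg_apply, norm_neg, norm_neg] at h

lemma norm_opInf_apply_sub_le {x y : H →L[ℂ] H} (hx : IsSelfAdjoint x) (hy : IsSelfAdjoint y)
    (ξ v : H) : ‖opInf x y ξ - v‖ ≤ 2 * ‖x ξ - v‖ + ‖y ξ - v‖ :=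
  calc ‖opInf x y ξ - v‖ = ‖(x ξ - v) - (x - y)⁺ ξ‖ := by
        rw [opInf, sub_apply, sub_right_comm]
    _ ≤ ‖x ξ - v‖ + ‖(x - y) ξ‖ :=
        (norm_sub_le _ _).trans (by gcongr; exact norm_posPart_apply_le (hx.sub hy) ξ)
    _ = ‖x ξ - v‖ + ‖(x ξ - v) - (y ξ - v)‖ := by rw [sub_apply, sub_sub_sub_cancel_right]
    _ ≤ ‖x ξ - v‖ + (‖x ξ - v‖ + ‖y ξ - v‖) := by gcongr; exact norm_sub_le _ _
    _ = 2 * ‖x ξ - v‖ + ‖y ξ - v‖ := by ring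

lemma norm_apply_sq_le_of_nonneg {x : H →L[ℂ] H} (hx : 0 ≤ x) (ξ : H) :
    ‖x ξ‖ ^ 2 ≤ ‖x‖ * (⟪x ξ, ξ⟫_ℂ).re := by
  have h_inner := (Complex.le_def.1 (le_iff_inner_le.1 (mul_self_le_norm_smul hx) ξ)).1
  rwa [smul_apply, inner_smul_left_eq_smul, Complex.smul_re, smul_eq_mul,
    ← congrArg (· * x) (IsSelfAdjoint.of_nonneg hx).star_eq, ← norm_apply_sq] at h_inner

end Operators

section MonotoneNets

variable {ι : Type*} [Preorder ι] [Nonempty ι] [IsDirectedOrder ι]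

lemma cauchySeq_of_dist_le_of_tendsto_zero {X : Type*} [PseudoMetricSpace X] {u : ι → X}
    {b : ι → ℝ} (hu : ∀ i j, i ≤ j → dist (u j) (u i) ≤ b i) (hb : Tendsto b atTop (𝓝 0)) :
    CauchySeq u := by
  refine Metric.cauchy_iff.2 ⟨map_neBot, fun ε hε => ?_⟩
  obtain ⟨i, hi⟩ := (hb.eventually (gt_mem_nhds (half_pos hε))).exists
  refine ⟨u '' Set.Ici i, image_mem_map (Ici_mem_atTop i), ?_⟩
  rintro _ ⟨j, hj, rfl⟩ _ ⟨k, hk, rfl⟩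
  linarith [dist_triangle_right (u j) (u k) (u i), hu i j hj, hu i k hk]

variable {H : Type*} [NormedAddCommGroup H] [InnerProductSpace ℂ H]

lemma isLUB_range_of_monotone_of_tendsto {f : ι → H →L[ℂ] H} (hf : Monotone f) {q : H →L[ℂ] H}
    (hq : ∀ ξ, Tendsto (fun i => f i ξ) atTop (𝓝 (q ξ))) : IsLUB (Set.range f) q := by
  have h_inner : ∀ ξ, Tendsto (fun i => ⟪f i ξ, ξ⟫_ℂ) atTop (𝓝 ⟪q ξ, ξ⟫_ℂ) := fun ξ =>
    (hq ξ).inner tendsto_const_nhds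
  refine ⟨?_, fun b hb => le_iff_inner_le.2 fun ξ => ?_⟩
  · rintro _ ⟨i, rfl⟩
    refine le_iff_inner_le.2 fun ξ => ge_of_tendsto (h_inner ξ) ?_
    exact (eventually_ge_atTop i).mono fun j hij => le_iff_inner_le.1 (hf hij) ξ
  · exact le_of_tendsto' (h_inner ξ) fun i => le_iff_inner_le.1 (hb ⟨i, rfl⟩) ξ

variable [CompleteSpace H]

lemma cauchySeq_apply_of_monotone {f : ι → H →L[ℂ] H} (hf : Monotone f)
    (hf_bdd : Bornology.IsBounded (Set.range f)) (ξ : H) : CauchySeq fun i => f i ξ := by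
  obtain ⟨C, hC_pos, hC⟩ := hf_bdd.exists_pos_norm_le
  replace hC : ∀ i, ‖f i‖ ≤ C := fun i => hC _ ⟨i, rfl⟩
  set φ : ι → ℝ := fun i => (⟪f i ξ, ξ⟫_ℂ).re
  have hφ_mono : Monotone φ := fun i j hij => (Complex.le_def.1 (le_iff_inner_le.1 (hf hij) ξ)).1
  have hφ_bdd : BddAbove (Set.range φ) := by
    refine ⟨C * ‖ξ‖ * ‖ξ‖, ?_⟩
    rintro _ ⟨i, rfl⟩
    exact (Complex.re_le_norm _).trans ((norm_inner_le_norm _ _).trans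
      (by gcongr; exact (f i).le_of_opNorm_le (hC i) ξ))
  have h_sq : ∀ i j, i ≤ j → ‖f j ξ - f i ξ‖ ^ 2 ≤ 2 * C * ((⨆ k, φ k) - φ i) := by
    intro i j hij
    have h := norm_apply_sq_le_of_nonneg (sub_nonneg.2 (hf hij)) ξ
    rw [sub_apply, inner_sub_left, Complex.sub_re] at h
    have h_norm : ‖f j - f i‖ ≤ 2 * C := by linarith [norm_sub_le (f j) (f i), hC i, hC j]
    exact h.trans (mul_le_mul h_norm (sub_le_sub_right (le_ciSup hφ_bdd j) _)
      (sub_nonneg.2 (hφ_mono hij)) (by positivity))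
  have h_tendsto : Tendsto (fun i => √(2 * C * ((⨆ k, φ k) - φ i))) atTop (𝓝 0) := by
    have h := (((tendsto_atTop_ciSup hφ_mono hφ_bdd).const_sub (⨆ k, φ k)).const_mul (2 * C)).sqrt
    rwa [sub_self, mul_zero, Real.sqrt_zero] at h
  refine cauchySeq_of_dist_le_of_tendsto_zero (fun i j hij => ?_) h_tendsto
  rw [dist_eq_norm]
  exact Real.le_sqrt_of_sq_le (h_sq i j hij)

/-- **Vigier's theorem**. -/
theorem exists_isLUB_tendsto_of_monotone {f : ι → H →L[ℂ] H} (hf : Monotone f)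
    (hf_bdd : Bornology.IsBounded (Set.range f)) :
    ∃ q, IsLUB (Set.range f) q ∧ ∀ ξ, Tendsto (fun i => f i ξ) atTop (𝓝 (q ξ)) := by
  choose g hg using fun ξ => cauchySeq_tendsto_of_complete (cauchySeq_apply_of_monotone hf hf_bdd ξ)
  let q := ContinuousLinearMap.ofTendstoOfBoundedRange g f (tendsto_pi_nhds.2 hg) hf_bdd
  exact ⟨q, isLUB_range_of_monotone_of_tendsto hf hg, hg⟩

end MonotoneNets

section MonotoneClosed

/-- A set is monotone closed if it contains the least upper bound of each of its nonempty,
upward directed, bounded subsets, whenever this least upper bound exists. -/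
def IsMonotoneClosed {R : Type*} [LE R] [Bornology R] (S : Set R) : Prop :=
  ∀ ⦃D : Set R⦄, D ⊆ S → D.Nonempty → DirectedOn (· ≤ ·) D → Bornology.IsBounded D →
    ∀ ⦃q⦄, IsLUB D q → q ∈ S

lemma IsMonotoneClosed.of_faithful_expectation {R σ τ : Type*} [AddCommGroup R] [PartialOrder R]
    [IsOrderedAddMonoid R] [Bornology R] [SetLike σ R] [AddSubgroupClass σ R] {M : σ}
    [SetLike τ R] {A : τ} (hM : IsMonotoneClosed (M : Set R))
    (hAM : (A : Set R) ⊆ M) (E : R →+ R) (hE_range : ∀ x ∈ M, E x ∈ A)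
    (hE_proj : ∀ a ∈ A, E a = a) (hE_pos : ∀ x ∈ M, 0 ≤ x → 0 ≤ E x)
    (hE_faithful : ∀ x ∈ M, 0 ≤ x → E x = 0 → x = 0) : IsMonotoneClosed (A : Set R) := by
  intro D hDA hD_ne hD_dir hD_bdd q hq
  have hqM : q ∈ M := hM (hDA.trans hAM) hD_ne hD_dir hD_bdd hq
  have hEqM : E q ∈ M := hAM (hE_range q hqM)
  have hq_le : q ≤ E q := by
    refine hq.2 fun d hd => ?_
    have h_pos := hE_pos (q - d) (sub_mem hqM (hAM (hDA hd))) (sub_nonneg.2 (hq.1 hd))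
    rwa [map_sub, hE_proj d (hDA hd), sub_nonneg] at h_pos
  have h_eq : E q - q = 0 := by
    refine hE_faithful _ (sub_mem hEqM hqM) (sub_nonneg.2 hq_le) ?_
    rw [map_sub, hE_proj _ (hE_range q hqM), sub_self]
  rw [← sub_eq_zero.1 h_eq]
  exact hE_range q hqM

variable {H : Type*} [NormedAddCommGroup H] [InnerProductSpace ℂ H] [CompleteSpace H]

lemma isMonotoneClosed_centralizer (S : Set (H →L[ℂ] H)) : IsMonotoneClosed S.centralizer := by
  intro D hDS hD_ne hD_dir hD_bdd q hq
  have : Nonempty D := hD_ne.to_subtype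
  have : IsDirectedOrder D := hD_dir.isDirectedOrder
  obtain ⟨q', hq'_lub, hq'_tendsto⟩ := exists_isLUB_tendsto_of_monotone
    (f := ((↑) : D → H →L[ℂ] H)) (Subtype.mono_coe _) (by rwa [Subtype.range_coe])
  rw [Subtype.range_coe] at hq'_lub
  obtain rfl := hq.unique hq'_lub
  intro s hs
  ext ξ
  refine tendsto_nhds_unique ((s.continuous.tendsto _).comp (hq'_tendsto ξ)) ?_
  refine (hq'_tendsto (s ξ)).congr fun d => ?_
  exact congr($(hDS d.2 s hs) ξ).symm

lemma isMonotoneClosed_vonNeumannAlgebra (M : VonNeumannAlgebra H) :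
    IsMonotoneClosed (M : Set (H →L[ℂ] H)) := by
  rw [← M.centralizer_centralizer]
  exact isMonotoneClosed_centralizer _

variable {ι : Type*} [Preorder ι] [Nonempty ι] [IsDirectedOrder ι]

lemma IsMonotoneClosed.exists_isLUB_tendsto {S : Set (H →L[ℂ] H)} (hS : IsMonotoneClosed S)
    {f : ι → H →L[ℂ] H} (hfS : ∀ i, f i ∈ S) (hf : Monotone f)
    (hf_bdd : Bornology.IsBounded (Set.range f)) :
    ∃ q ∈ S, IsLUB (Set.range f) q ∧ ∀ ξ, Tendsto (fun i => f i ξ) atTop (𝓝 (q ξ)) := by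
  obtain ⟨q, hq_lub, hq_tendsto⟩ := exists_isLUB_tendsto_of_monotone hf hf_bdd
  exact ⟨q, hS (Set.range_subset_iff.2 hfS) (Set.range_nonempty f)
    (directedOn_range.2 hf.directed_le) hf_bdd hq_lub, hq_lub, hq_tendsto⟩

lemma IsMonotoneClosed.exists_isGLB_tendsto {σ : Type*} [SetLike σ (H →L[ℂ] H)]
    [NegMemClass σ (H →L[ℂ] H)] {S : σ} (hS : IsMonotoneClosed (S : Set (H →L[ℂ] H)))
    {f : ι → H →L[ℂ] H} (hfS : ∀ i, f i ∈ S) (hf : Antitone f)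
    (hf_bdd : Bornology.IsBounded (Set.range f)) :
    ∃ q ∈ S, IsGLB (Set.range f) q ∧ ∀ ξ, Tendsto (fun i => f i ξ) atTop (𝓝 (q ξ)) := by
  obtain ⟨q, hqS, hq_lub, hq_tendsto⟩ := hS.exists_isLUB_tendsto (f := -f)
    (fun i => neg_mem (hfS i)) hf.neg (by rw [← Set.neg_range']; exact hf_bdd.neg)
  refine ⟨-q, neg_mem hqS, ?_, fun ξ => ?_⟩
  · rwa [← isLUB_neg', neg_neg, Set.neg_range']
  · simpa using (hq_tendsto ξ).neg

end MonotoneClosed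

section CyclicSubspace

lemma coe_centralizer_coe {R : Type*} [Ring R] [StarRing R] [Algebra ℂ R] [StarModule ℂ R]
    (B : StarSubalgebra ℂ R) :
    (StarSubalgebra.centralizer ℂ (B : Set R) : Set R) = (B : Set R).centralizer := by
  rw [StarSubalgebra.coe_centralizer, StarMemClass.star_coe_eq, Set.union_self]

variable {H : Type*} [NormedAddCommGroup H] [InnerProductSpace ℂ H] [CompleteSpace H]

lemma commute_starProjection {K : Submodule ℂ H} [K.HasOrthogonalProjection] {T : H →L[ℂ] H}
    (hT : ∀ v ∈ K, T v ∈ K) (hT_star : ∀ v ∈ K, star T v ∈ K) : Commute K.starProjection T := by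
  refine (ContinuousLinearMap.IsIdempotentElem.commute_iff K.isIdempotentElem_starProjection).2 ?_
  rw [Submodule.range_starProjection, Submodule.ker_starProjection]
  exact ⟨hT, ContinuousLinearMap.orthogonal_mem_invtSubmodule hT_star⟩

/-- The closed subspace `[Bξ]` generated by the vectors `b ξ` with `b ∈ B`. -/
noncomputable def cyclicSubspace (B : StarSubalgebra ℂ (H →L[ℂ] H)) (ξ : H) : Submodule ℂ H :=
  (B.toSubalgebra.toSubmodule.map (ContinuousLinearMap.apply ℂ H ξ).toLinearMap).topologicalClosure

lemma coe_cyclicSubspace (B : StarSubalgebra ℂ (H →L[ℂ] H)) (ξ : H) :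
    (cyclicSubspace B ξ : Set H) = closure ((fun b => b ξ) '' (B : Set (H →L[ℂ] H))) := rfl

variable {B : StarSubalgebra ℂ (H →L[ℂ] H)} {ξ : H}

lemma apply_mem_cyclicSubspace {b : H →L[ℂ] H} (hb : b ∈ B) : b ξ ∈ cyclicSubspace B ξ :=
  subset_closure ⟨b, hb, rfl⟩

lemma self_mem_cyclicSubspace : ξ ∈ cyclicSubspace B ξ :=
  apply_mem_cyclicSubspace (one_mem B)

lemma apply_mem_cyclicSubspace_of_mem {b : H →L[ℂ] H} (hb : b ∈ B) {v : H}
    (hv : v ∈ cyclicSubspace B ξ) : b v ∈ cyclicSubspace B ξ := by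
  refine map_mem_closure b.continuous hv ?_
  rintro _ ⟨c, hc, rfl⟩
  exact ⟨b * c, B.mul_mem hb hc, rfl⟩

instance : (cyclicSubspace B ξ).HasOrthogonalProjection :=
  inferInstanceAs (Submodule.topologicalClosure _).HasOrthogonalProjection

lemma starProjection_cyclicSubspace_mem_centralizer :
    (cyclicSubspace B ξ).starProjection ∈ (B : Set (H →L[ℂ] H)).centralizer := fun _ hb =>
  (commute_starProjection (fun _ => apply_mem_cyclicSubspace_of_mem hb)
    (fun _ => apply_mem_cyclicSubspace_of_mem (star_mem hb))).symm

lemma apply_mem_cyclicSubspace_of_mem_centralizer_centralizer {T : H →L[ℂ] H}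
    (hT : T ∈ (B : Set (H →L[ℂ] H)).centralizer.centralizer) : T ξ ∈ cyclicSubspace B ξ := by
  have h_comm := hT _ (starProjection_cyclicSubspace_mem_centralizer (B := B) (ξ := ξ))
  rw [← Submodule.starProjection_eq_self_iff]
  calc (cyclicSubspace B ξ).starProjection (T ξ)
      = T ((cyclicSubspace B ξ).starProjection ξ) := congr($h_comm ξ)
    _ = T ξ := by rw [Submodule.starProjection_eq_self_iff.2 self_mem_cyclicSubspace]

lemma apply_eq_zero_of_mem_cyclicSubspace {x : H →L[ℂ] H}
    (hx : x ∈ (B : Set (H →L[ℂ] H)).centralizer) (hxξ : x ξ = 0) {v : H}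
    (hv : v ∈ cyclicSubspace B ξ) : x v = 0 := by
  refine closure_minimal ?_ (isClosed_singleton.preimage x.continuous) hv
  rintro _ ⟨b, hb, rfl⟩
  calc x (b ξ) = b (x ξ) := congr($(hx b hb) ξ).symm
    _ = 0 := by rw [hxξ, map_zero]

-- The projection `p` lies in the double commutant of `B`, which is commutative.
lemma exists_forall_apply_eq_zero_of_apply_eq_zero
    (hcomm : ∀ a ∈ B, ∀ b ∈ B, Commute a b) (ξ η : H) :
    ∃ ζ : H, ∀ x ∈ (B : Set (H →L[ℂ] H)).centralizer.centralizer,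
      x ζ = 0 → x ξ = 0 ∧ x η = 0 := by
  set C := StarSubalgebra.centralizer ℂ (B : Set (H →L[ℂ] H))
  have hC : (C : Set (H →L[ℂ] H)) = (B : Set (H →L[ℂ] H)).centralizer := coe_centralizer_coe B
  set p := (cyclicSubspace C ξ).starProjection
  have hpξ : p ξ = ξ := Submodule.starProjection_eq_self_iff.2 self_mem_cyclicSubspace
  have hp_idem (v : H) : p (p v) = p v :=
    congr($((cyclicSubspace C ξ).isIdempotentElem_starProjection) v)
  refine ⟨ξ + (η - p η), fun x hx hxζ => ?_⟩
  have hxp : p * x = x * p := Set.centralizer_centralizer_comm_of_comm hcomm p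
    (hC ▸ starProjection_cyclicSubspace_mem_centralizer) x hx
  have hxξ : x ξ = 0 :=
    calc x ξ = x (p (ξ + (η - p η))) := by
          rw [map_add p, map_sub p, hp_idem, sub_self, add_zero, hpξ]
      _ = p (x (ξ + (η - p η))) := congr($hxp (ξ + (η - p η))).symm
      _ = 0 := by rw [hxζ, map_zero]
  have hxpη : x (p η) = 0 :=
    apply_eq_zero_of_mem_cyclicSubspace (hC ▸ hx) hxξ
      ((cyclicSubspace C ξ).starProjection_apply_mem η)
  refine ⟨hxξ, ?_⟩
  rwa [map_add, map_sub, hxξ, hxpη, zero_add, sub_zero] at hxζ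

end CyclicSubspace

section PartialInf

variable {R : Type*} [CStarAlgebra R]

/-- The meet `a 0 ⊓ ⋯ ⊓ a n` in the sense of `opInf`. -/
noncomputable def partialInf (a : ℕ → R) : ℕ → R
  | 0 => a 0
  | n + 1 => opInf (a (n + 1)) (partialInf a n)

variable [PartialOrder R] [StarOrderedRing R] {A : StarSubalgebra ℂ R} {a : ℕ → R}

lemma partialInf_mem_Icc (hA : IsClosed (A : Set R)) (hcomm : ∀ a ∈ A, ∀ b ∈ A, Commute a b)
    (ha : ∀ n, a n ∈ (A : Set R) ∩ Set.Icc 0 1) (n : ℕ) :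
    partialInf a n ∈ (A : Set R) ∩ Set.Icc 0 1 := by
  induction n with
  | zero => exact ha 0
  | succ n ih => exact opInf_mem_Icc hA hcomm (ha (n + 1)) ih

lemma partialInf_antitone (hA : IsClosed (A : Set R)) (hcomm : ∀ a ∈ A, ∀ b ∈ A, Commute a b)
    (ha : ∀ n, a n ∈ (A : Set R) ∩ Set.Icc 0 1) : Antitone (partialInf a) :=
  antitone_nat_of_succ_le fun n => opInf_le_right (.of_nonneg (ha (n + 1)).2.1)
    (.of_nonneg (partialInf_mem_Icc hA hcomm ha n).2.1)

lemma partialInf_le (a : ℕ → R) (n : ℕ) : partialInf a n ≤ a n := by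
  cases n with
  | zero => exact le_rfl
  | succ n => exact opInf_le_left _ _

lemma le_partialInf (hA : IsClosed (A : Set R)) (hcomm : ∀ a ∈ A, ∀ b ∈ A, Commute a b)
    (ha : ∀ n, a n ∈ (A : Set R) ∩ Set.Icc 0 1) {z : R} (hzA : z ∈ A) (hz : ∀ n, z ≤ a n)
    (n : ℕ) : z ≤ partialInf a n := by
  induction n with
  | zero => exact hz 0
  | succ n ih =>
    have h_mem := partialInf_mem_Icc hA hcomm ha n
    exact le_opInf (.of_nonneg (ha (n + 1)).2.1) (.of_nonneg h_mem.2.1) (hz (n + 1)) ih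
      (hcomm _ (ha (n + 1)).1 _ h_mem.1) (hcomm _ (ha (n + 1)).1 z hzA) (hcomm _ h_mem.1 z hzA)

end PartialInf

section DoubleCommutant

lemma commute_of_mem_centralizer_centralizer {R : Type*} [Mul R] {S : Set R}
    (hcomm : ∀ a ∈ S, ∀ b ∈ S, Commute a b) {a T : R} (ha : a ∈ S)
    (hT : T ∈ S.centralizer.centralizer) : Commute a T :=
  hT a fun b hb => hcomm b hb a ha

variable {H : Type*} [NormedAddCommGroup H] [InnerProductSpace ℂ H] [CompleteSpace H]
  {A : StarSubalgebra ℂ (H →L[ℂ] H)}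

lemma norm_partialInf_apply_sub_le (hA : IsClosed (A : Set (H →L[ℂ] H)))
    (hcomm : ∀ a ∈ A, ∀ b ∈ A, Commute a b) {a : ℕ → H →L[ℂ] H}
    (ha : ∀ n, a n ∈ (A : Set (H →L[ℂ] H)) ∩ Set.Icc 0 1) (ξ v : H) (n : ℕ) :
    ‖partialInf a n ξ - v‖ ≤ 2 * ∑ k ∈ Finset.range (n + 1), ‖a k ξ - v‖ := by
  induction n with
  | zero => simpa [partialInf] using le_mul_of_one_le_left (norm_nonneg (a 0 ξ - v)) one_le_two
  | succ n ih =>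
    have h := norm_opInf_apply_sub_le (.of_nonneg (ha (n + 1)).2.1)
      (.of_nonneg (partialInf_mem_Icc hA hcomm ha n).2.1) ξ v
    rw [Finset.sum_range_succ, partialInf]
    linarith

lemma exists_glb_norm_apply_sub_le (hA : IsClosed (A : Set (H →L[ℂ] H)))
    (hcomm : ∀ a ∈ A, ∀ b ∈ A, Commute a b) (hmono : IsMonotoneClosed (A : Set (H →L[ℂ] H)))
    {a : ℕ → H →L[ℂ] H} (ha : ∀ n, a n ∈ (A : Set (H →L[ℂ] H)) ∩ Set.Icc 0 1) {ξ v : H}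
    (hsum : Summable fun n => ‖a n ξ - v‖) :
    ∃ c ∈ A, (∀ n, c ≤ a n) ∧ (∀ z ∈ A, (∀ n, z ≤ a n) → z ≤ c) ∧
      ‖c ξ - v‖ ≤ 2 * ∑' n, ‖a n ξ - v‖ := by
  have h_mem := partialInf_mem_Icc hA hcomm ha
  obtain ⟨c, hcA, hc_glb, hc_tendsto⟩ := hmono.exists_isGLB_tendsto (fun n => (h_mem n).1)
    (partialInf_antitone hA hcomm ha)
    (isBounded_Icc_zero_one.subset (Set.range_subset_iff.2 fun n => (h_mem n).2))
  refine ⟨c, hcA, fun n => (hc_glb.1 ⟨n, rfl⟩).trans (partialInf_le a n), fun z hzA hz => ?_, ?_⟩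
  · refine hc_glb.2 ?_
    rintro _ ⟨n, rfl⟩
    exact le_partialInf hA hcomm ha hzA hz n
  · refine le_of_tendsto' ((hc_tendsto ξ).sub_const v).norm fun n => ?_
    refine (norm_partialInf_apply_sub_le hA hcomm ha ξ v n).trans ?_
    gcongr
    exact hsum.sum_le_tsum _ fun k _ => norm_nonneg _

-- The element `b` is the limit inferior of the sequence `a`.
lemma exists_mem_Icc_apply_eq_of_summable (hA : IsClosed (A : Set (H →L[ℂ] H)))
    (hcomm : ∀ a ∈ A, ∀ b ∈ A, Commute a b) (hmono : IsMonotoneClosed (A : Set (H →L[ℂ] H)))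
    {a : ℕ → H →L[ℂ] H} (ha : ∀ n, a n ∈ (A : Set (H →L[ℂ] H)) ∩ Set.Icc 0 1) {ξ v : H}
    (hsum : Summable fun n => ‖a n ξ - v‖) :
    ∃ b ∈ (A : Set (H →L[ℂ] H)) ∩ Set.Icc 0 1, b ξ = v := by
  have h_tail (n : ℕ) : ∃ c ∈ A, (∀ k, c ≤ a (k + n)) ∧
      (∀ z ∈ A, (∀ k, z ≤ a (k + n)) → z ≤ c) ∧ ‖c ξ - v‖ ≤ 2 * ∑' k, ‖a (k + n) ξ - v‖ :=
    exists_glb_norm_apply_sub_le hA hcomm hmono (fun k => ha (k + n))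
      ((summable_nat_add_iff (f := fun k => ‖a k ξ - v‖) n).2 hsum)
  choose c hcA hc_le hc_glb hc_norm using h_tail
  have hc_mono : Monotone c := monotone_nat_of_le_succ fun n =>
    hc_glb (n + 1) (c n) (hcA n) fun k => by
      have h := hc_le n (k + 1)
      rwa [add_right_comm] at h
  have hc_Icc (n : ℕ) : c n ∈ Set.Icc (0 : H →L[ℂ] H) 1 :=
    ⟨hc_glb n 0 (zero_mem A) fun k => (ha (k + n)).2.1, (hc_le n 0).trans (ha (0 + n)).2.2⟩
  obtain ⟨b, hbA, hb_lub, hb_tendsto⟩ := hmono.exists_isLUB_tendsto hcA hc_mono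
    (isBounded_Icc_zero_one.subset (Set.range_subset_iff.2 hc_Icc))
  have hb_Icc : b ∈ Set.Icc (0 : H →L[ℂ] H) 1 :=
    ⟨(hc_Icc 0).1.trans (hb_lub.1 (Set.mem_range_self 0)),
      hb_lub.2 (Set.forall_mem_range.2 fun n => (hc_Icc n).2)⟩
  have hc_tendsto : Tendsto (fun n => c n ξ) atTop (𝓝 v) := by
    refine tendsto_iff_norm_sub_tendsto_zero.2 (squeeze_zero (fun n => norm_nonneg _) hc_norm ?_)
    have h := (tendsto_sum_nat_add fun n => ‖a n ξ - v‖).const_mul 2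
    rwa [mul_zero] at h
  exact ⟨b, ⟨hbA, hb_Icc⟩, tendsto_nhds_unique (hb_tendsto ξ) hc_tendsto⟩

lemma isClosed_image_apply_Icc (hA : IsClosed (A : Set (H →L[ℂ] H)))
    (hcomm : ∀ a ∈ A, ∀ b ∈ A, Commute a b) (hmono : IsMonotoneClosed (A : Set (H →L[ℂ] H)))
    (ξ : H) : IsClosed ((fun a : H →L[ℂ] H => a ξ) '' ((A : Set (H →L[ℂ] H)) ∩ Set.Icc 0 1)) := by
  refine isClosed_of_closure_subset fun v hv => ?_
  have h_approx (n : ℕ) : ∃ a ∈ (A : Set (H →L[ℂ] H)) ∩ Set.Icc 0 1,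
      ‖a ξ - v‖ < (1 / 2) ^ n := by
    obtain ⟨_, ⟨a, ha, rfl⟩, hav⟩ := Metric.mem_closure_iff.1 hv _ (pow_pos one_half_pos n)
    exact ⟨a, ha, by rwa [dist_comm, dist_eq_norm] at hav⟩
  choose a ha ha_norm using h_approx
  exact exists_mem_Icc_apply_eq_of_summable hA hcomm hmono ha
    (.of_nonneg_of_le (fun n => norm_nonneg _) (fun n => (ha_norm n).le) summable_geometric_two)

variable {T : H →L[ℂ] H}

lemma exists_mem_Icc_norm_sub_apply_le (hA : IsClosed (A : Set (H →L[ℂ] H)))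
    {a : H →L[ℂ] H} (ha : a ∈ A) (hT : T ∈ Set.Icc 0 1) (hTA : ∀ b ∈ A, Commute b T)
    (ha_normal : IsStarNormal a) (ξ : H) :
    ∃ b ∈ (A : Set (H →L[ℂ] H)) ∩ Set.Icc 0 1, ‖(b - T) ξ‖ ≤ ‖(a - T) ξ‖ := by
  have hT_sa : IsSelfAdjoint T := .of_nonneg hT.1
  have h_realPart : (ℜ (a - T) : H →L[ℂ] H) = ℜ a - T := by
    rw [map_sub, AddSubgroup.coe_sub, hT_sa.coe_realPart]
  have h_normal : IsStarNormal (a - T) := by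
    refine ⟨?_⟩
    rw [star_sub, hT_sa.star_eq]
    exact (ha_normal.star_comm_self.sub_right (hTA _ (star_mem ha))).sub_left
      ((hTA a ha).symm.sub_right (Commute.refl T))
  have h_posPart_mem : (ℜ a : H →L[ℂ] H)⁺ ∈ A := posPart_mem hA (realPart_mem ha)
  have h_posPart_sa : IsSelfAdjoint (ℜ a : H →L[ℂ] H)⁺ := .of_nonneg (CFC.posPart_nonneg _)
  refine ⟨opInf 1 (ℜ a : H →L[ℂ] H)⁺, ⟨?_, ?_, opInf_le_left _ _⟩, ?_⟩
  · exact sub_mem (one_mem A) (posPart_mem hA (sub_mem (one_mem A) h_posPart_mem))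
  · exact le_opInf (.one _) h_posPart_sa zero_le_one (CFC.posPart_nonneg _) (Commute.one_left _)
      (Commute.one_left _) (Commute.zero_right _)
  · calc ‖(opInf 1 (ℜ a : H →L[ℂ] H)⁺ - T) ξ‖
        ≤ ‖((ℜ a : H →L[ℂ] H)⁺ - T) ξ‖ :=
          norm_opInf_one_sub_apply_le h_posPart_sa hT.2 (hTA _ h_posPart_mem) ξ
      _ ≤ ‖((ℜ a : H →L[ℂ] H) - T) ξ‖ :=
          norm_posPart_sub_apply_le (ℜ a).2 hT.1 (hTA _ (realPart_mem ha)) ξ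
      _ ≤ ‖(a - T) ξ‖ := by
          rw [← h_realPart]
          exact norm_realPart_apply_le (a - T) ξ

lemma exists_mem_Icc_apply_eq (hA : IsClosed (A : Set (H →L[ℂ] H)))
    (hcomm : ∀ a ∈ A, ∀ b ∈ A, Commute a b) (hmono : IsMonotoneClosed (A : Set (H →L[ℂ] H)))
    (hT : T ∈ (A : Set (H →L[ℂ] H)).centralizer.centralizer ∩ Set.Icc 0 1) (ξ : H) :
    ∃ b ∈ (A : Set (H →L[ℂ] H)) ∩ Set.Icc 0 1, b ξ = T ξ := by
  refine (isClosed_image_apply_Icc hA hcomm hmono ξ).closure_subset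
    (Metric.mem_closure_iff.2 fun ε hε => ?_)
  have h_cyclic : T ξ ∈ closure ((fun a : H →L[ℂ] H => a ξ) '' A) := by
    rw [← coe_cyclicSubspace]
    exact apply_mem_cyclicSubspace_of_mem_centralizer_centralizer hT.1
  obtain ⟨_, ⟨a, ha, rfl⟩, ha_dist⟩ := Metric.mem_closure_iff.1 h_cyclic ε hε
  obtain ⟨b, hb, hb_norm⟩ := exists_mem_Icc_norm_sub_apply_le hA ha hT.2
    (fun b hb => commute_of_mem_centralizer_centralizer hcomm hb hT.1)
    ⟨hcomm _ (star_mem ha) a ha⟩ ξ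
  refine ⟨b ξ, ⟨b, hb, rfl⟩, lt_of_le_of_lt ?_ ha_dist⟩
  rwa [dist_comm, dist_eq_norm, dist_comm, dist_eq_norm]

lemma exists_mem_Icc_apply_eq_apply_eq (hA : IsClosed (A : Set (H →L[ℂ] H)))
    (hcomm : ∀ a ∈ A, ∀ b ∈ A, Commute a b) (hmono : IsMonotoneClosed (A : Set (H →L[ℂ] H)))
    (hT : T ∈ (A : Set (H →L[ℂ] H)).centralizer.centralizer ∩ Set.Icc 0 1) (ξ η : H) :
    ∃ b ∈ (A : Set (H →L[ℂ] H)) ∩ Set.Icc 0 1, b ξ = T ξ ∧ b η = T η := by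
  obtain ⟨ζ, hζ⟩ := exists_forall_apply_eq_zero_of_apply_eq_zero hcomm ξ η
  obtain ⟨b, hb, hbζ⟩ := exists_mem_Icc_apply_eq hA hcomm hmono hT ζ
  have h_sub : b - T ∈ (A : Set (H →L[ℂ] H)).centralizer.centralizer :=
    (Subring.centralizer _).sub_mem (Set.subset_centralizer_centralizer hb.1) hT.1
  obtain ⟨hξ, hη⟩ := hζ (b - T) h_sub (sub_eq_zero.2 hbζ)
  exact ⟨b, hb, sub_eq_zero.1 hξ, sub_eq_zero.1 hη⟩

lemma IsMonotoneClosed.exists_isGLB_of_opInf_mem (hmono : IsMonotoneClosed (A : Set (H →L[ℂ] H)))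
    {D : Set (H →L[ℂ] H)} (hD : D ⊆ (A : Set (H →L[ℂ] H)) ∩ Set.Icc 0 1) (hD_ne : D.Nonempty)
    (hD_inf : ∀ x ∈ D, ∀ y ∈ D, opInf x y ∈ D) :
    ∃ q ∈ A, IsGLB D q ∧ ∀ ξ v, (∀ d ∈ D, d ξ = v) → q ξ = v := by
  have : Nonempty Dᵒᵈ := hD_ne.to_subtype
  have hD_dir : DirectedOn (· ≥ ·) D := fun x hx y hy => ⟨opInf x y, hD_inf x hx y hy,
    opInf_le_left x y, opInf_le_right (.of_nonneg (hD hx).2.1) (.of_nonneg (hD hy).2.1)⟩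
  have : IsCodirectedOrder D := hD_dir.isCodirectedOrder
  have h_range : Set.range (fun d : Dᵒᵈ => (d.ofDual : H →L[ℂ] H)) = D := Subtype.range_coe
  obtain ⟨q, hqA, hq_glb, hq_tendsto⟩ := hmono.exists_isGLB_tendsto
    (f := fun d : Dᵒᵈ => (d.ofDual : H →L[ℂ] H)) (fun d => (hD d.ofDual.2).1)
    (fun _ _ h => h) (isBounded_Icc_zero_one.subset (h_range.trans_subset fun d hd => (hD hd).2))
  rw [h_range] at hq_glb
  refine ⟨q, hqA, hq_glb, fun ξ v hv => tendsto_nhds_unique (hq_tendsto ξ) ?_⟩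
  exact tendsto_const_nhds.congr fun d => (hv _ d.ofDual.2).symm

lemma exists_mem_Icc_le_apply_eq (hA : IsClosed (A : Set (H →L[ℂ] H)))
    (hcomm : ∀ a ∈ A, ∀ b ∈ A, Commute a b) (hmono : IsMonotoneClosed (A : Set (H →L[ℂ] H)))
    (hT : T ∈ (A : Set (H →L[ℂ] H)).centralizer.centralizer ∩ Set.Icc 0 1) (ξ : H) :
    ∃ b ∈ (A : Set (H →L[ℂ] H)) ∩ Set.Icc 0 1, b ≤ T ∧ b ξ = T ξ := by
  set D : Set (H →L[ℂ] H) := {b | b ∈ (A : Set (H →L[ℂ] H)) ∩ Set.Icc 0 1 ∧ b ξ = T ξ}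
  have hD_inf : ∀ x ∈ D, ∀ y ∈ D, opInf x y ∈ D := by
    rintro x ⟨hx, hxξ⟩ y ⟨hy, hyξ⟩
    have h := norm_opInf_apply_sub_le (.of_nonneg hx.2.1) (.of_nonneg hy.2.1) ξ (T ξ)
    rw [hxξ, hyξ, sub_self, norm_zero, mul_zero, add_zero, norm_le_zero_iff, sub_eq_zero] at h
    exact ⟨opInf_mem_Icc hA hcomm hx hy, h⟩
  obtain ⟨b₀, hb₀, hb₀ξ⟩ := exists_mem_Icc_apply_eq hA hcomm hmono hT ξ
  obtain ⟨q, hqA, hq_glb, hq_apply⟩ := hmono.exists_isGLB_of_opInf_mem (D := D)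
    (fun _ hd => hd.1) ⟨b₀, hb₀, hb₀ξ⟩ hD_inf
  refine ⟨q, ⟨hqA, hq_glb.2 fun d hd => hd.1.2.1, (hq_glb.1 ⟨hb₀, hb₀ξ⟩).trans hb₀.2.2⟩,
    le_iff_inner_le.2 fun η => ?_, hq_apply ξ (T ξ) fun d hd => hd.2⟩
  obtain ⟨b, hb, hbξ, hbη⟩ := exists_mem_Icc_apply_eq_apply_eq hA hcomm hmono hT ξ η
  rw [← hbη]
  exact le_iff_inner_le.1 (hq_glb.1 ⟨hb, hbξ⟩) η

lemma exists_mem_Icc_ge_apply_eq (hA : IsClosed (A : Set (H →L[ℂ] H)))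
    (hcomm : ∀ a ∈ A, ∀ b ∈ A, Commute a b) (hmono : IsMonotoneClosed (A : Set (H →L[ℂ] H)))
    (hT : T ∈ (A : Set (H →L[ℂ] H)).centralizer.centralizer ∩ Set.Icc 0 1) (ξ : H) :
    ∃ b ∈ (A : Set (H →L[ℂ] H)) ∩ Set.Icc 0 1, T ≤ b ∧ b ξ = T ξ := by
  have h_one_sub : 1 - T ∈ (A : Set (H →L[ℂ] H)).centralizer.centralizer ∩ Set.Icc 0 1 :=
    ⟨(Subring.centralizer _).sub_mem (one_mem _) hT.1, sub_nonneg.2 hT.2.2,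
      sub_le_self 1 hT.2.1⟩
  obtain ⟨b, hb, hb_le, hbξ⟩ := exists_mem_Icc_le_apply_eq hA hcomm hmono h_one_sub ξ
  refine ⟨1 - b, ⟨sub_mem (one_mem A) hb.1, sub_nonneg.2 hb.2.2, sub_le_self 1 hb.2.1⟩,
    le_sub_comm.1 hb_le, ?_⟩
  rw [sub_apply, hbξ, sub_apply, sub_sub_cancel]

lemma mem_of_mem_centralizer_centralizer_Icc (hA : IsClosed (A : Set (H →L[ℂ] H)))
    (hcomm : ∀ a ∈ A, ∀ b ∈ A, Commute a b) (hmono : IsMonotoneClosed (A : Set (H →L[ℂ] H)))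
    (hT : T ∈ (A : Set (H →L[ℂ] H)).centralizer.centralizer ∩ Set.Icc 0 1) : T ∈ A := by
  set D : Set (H →L[ℂ] H) := {b | b ∈ (A : Set (H →L[ℂ] H)) ∩ Set.Icc 0 1 ∧ T ≤ b}
  have hD_inf : ∀ x ∈ D, ∀ y ∈ D, opInf x y ∈ D := fun x ⟨hx, hTx⟩ y ⟨hy, hTy⟩ =>
    ⟨opInf_mem_Icc hA hcomm hx hy,
      le_opInf (.of_nonneg hx.2.1) (.of_nonneg hy.2.1) hTx hTy (hcomm x hx.1 y hy.1)
        (commute_of_mem_centralizer_centralizer hcomm hx.1 hT.1)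
        (commute_of_mem_centralizer_centralizer hcomm hy.1 hT.1)⟩
  obtain ⟨q, hqA, hq_glb, -⟩ := hmono.exists_isGLB_of_opInf_mem (D := D)
    (fun _ hd => hd.1) ⟨1, ⟨one_mem A, zero_le_one, le_rfl⟩, hT.2.2⟩ hD_inf
  have hTq : T ≤ q := hq_glb.2 fun d hd => hd.2
  have hqT : q ≤ T := by
    refine le_iff_inner_le.2 fun ξ => ?_
    obtain ⟨b, hb, hTb, hbξ⟩ := exists_mem_Icc_ge_apply_eq hA hcomm hmono hT ξ
    rw [← hbξ]
    exact le_iff_inner_le.1 (hq_glb.1 ⟨hb, hTb⟩) ξ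
  exact hTq.antisymm hqT ▸ hqA

theorem centralizer_centralizer_eq_of_isMonotoneClosed (hA : IsClosed (A : Set (H →L[ℂ] H)))
    (hcomm : ∀ a ∈ A, ∀ b ∈ A, Commute a b) (hmono : IsMonotoneClosed (A : Set (H →L[ℂ] H))) :
    (A : Set (H →L[ℂ] H)).centralizer.centralizer = A := by
  set A' := StarSubalgebra.centralizer ℂ (A : Set (H →L[ℂ] H))
  have h_coe : (StarSubalgebra.centralizer ℂ (A' : Set (H →L[ℂ] H)) : Set (H →L[ℂ] H)) =
      (A : Set (H →L[ℂ] H)).centralizer.centralizer := by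
    rw [coe_centralizer_coe, coe_centralizer_coe]
  refine Set.Subset.antisymm ?_ Set.subset_centralizer_centralizer
  rw [← h_coe]
  refine le_of_Icc_zero_one_subset (h_coe ▸ Set.isClosed_centralizer _) fun T hT => ?_
  rw [h_coe] at hT
  exact mem_of_mem_centralizer_centralizer_Icc hA hcomm hmono hT

end DoubleCommutant

end FaithfulExpectation

/-- Let `M` be a von Neumann algebra acting on a complex Hilbert space `H`
and let `A ⊆ M` be a commutative unital norm-closed *-subalgebra. Suppose there exists a
faithful conditional expectation `E : M → A`. Then `A` is a von Neumann subalgebra of `M`;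
in particular `A` equals its own double commutant in `B(H)`. -/
theorem faithful_expectation_vonNeumann
    {H : Type*} [NormedAddCommGroup H] [InnerProductSpace ℂ H] [CompleteSpace H]
    (M : VonNeumannAlgebra H)
    (A : StarSubalgebra ℂ (H →L[ℂ] H))
    (hAM : (A : Set (H →L[ℂ] H)) ⊆ (M : Set (H →L[ℂ] H)))
    (hAclosed : IsClosed (A : Set (H →L[ℂ] H)))
    (hAcomm : ∀ a ∈ A, ∀ b ∈ A, a * b = b * a)
    (E : (H →L[ℂ] H) →ₗ[ℂ] (H →L[ℂ] H))
    (hErange : ∀ x ∈ M, E x ∈ A)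
    (hEproj : ∀ a ∈ A, E a = a)
    (hEpos : ∀ x ∈ M, 0 ≤ x → 0 ≤ E x)
    (hEbimod : ∀ a ∈ A, ∀ b ∈ A, ∀ x ∈ M, E (a * x * b) = a * E x * b)
    (hEfaithful : ∀ x ∈ M, 0 ≤ x → E x = 0 → x = 0) :
    Set.centralizer (Set.centralizer (A : Set (H →L[ℂ] H))) = (A : Set (H →L[ℂ] H)) := by
  have hA_mono : FaithfulExpectation.IsMonotoneClosed (A : Set (H →L[ℂ] H)) :=
    .of_faithful_expectation (FaithfulExpectation.isMonotoneClosed_vonNeumannAlgebra M) hAM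
      E.toAddMonoidHom hErange hEproj hEpos hEfaithful
  exact FaithfulExpectation.centralizer_centralizer_eq_of_isMonotoneClosed hAclosed hAcomm hA_mono
end

section
/- Let H be a complex Hilbert space and let A ⊆ B(H) be a commutative von Neumann subalgebra (a unital *-subalgebra equal to its double commutant). Suppose there exists a faithful conditional expectation E : B(H) → A. Then A is atomic: every nonzero projection e ∈ A dominates a minimal projection of A, that is, there exists a projection q ∈ A with 0 ≠ q ≤ e such that the only projections r ∈ A with r ≤ q are r = 0 and r = q. -/
/-!
Fix `ξ` with `e ξ ≠ 0`, let `p` be the rank-one operator `⟨ξ, ·⟩ ξ` and `a = E p`. Since `a`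
commutes with `A`, a projection `f ∈ A` satisfies `a f = f a f = E (f p f)`, and `f p f` is the
rank-one operator of `f ξ`. Hence `‖a f‖ ≤ ‖E‖ ‖f ξ‖²`, while `a e ≠ 0` by faithfulness.

Call `f` small if `‖a f‖ ≤ ε`, where `ε < ‖a e‖`. The norm of `a (f + g)` for orthogonal `f`, `g`
is the maximum of `‖a f‖` and `‖a g‖`, so orthogonal sums of small projections are small. A chain
of projections converges strongly to its infimum `f₀`, so `(f - f₀) ξ` becomes arbitrarily short
along the chain and some `f - f₀` is small; thus `f₀` is not small if no member of the chain is.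
By Zorn's lemma there is a minimal non-small projection below `e`. It cannot be split into two
smaller projections, as both of them would be small.
-/

open Filter InnerProductSpace
open scoped Topology

section RCLike

variable {𝕜 H : Type*} [RCLike 𝕜] [NormedAddCommGroup H] [InnerProductSpace 𝕜 H] [CompleteSpace H]

theorem mul_rankOne_mul_star (f g : H →L[𝕜] H) (x y : H) :
    f * rankOne 𝕜 x y * star g = rankOne 𝕜 (f x) (g y) := by
  simp only [ContinuousLinearMap.mul_def, ContinuousLinearMap.star_eq_adjoint, comp_rankOne,
    rankOne_comp, ContinuousLinearMap.adjoint_adjoint]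

theorem exists_isStarProjection_tendsto_apply_of_antitone {ι : Type*} [Preorder ι]
    {f : ι → H →L[𝕜] H}
    (hf : ∀ i, IsStarProjection (f i)) (hanti : Antitone f) :
    ∃ f₀, IsStarProjection f₀ ∧ (∀ i, f₀ ≤ f i) ∧
      ∀ x, Tendsto (fun i ↦ f i x) atTop (𝓝 (f₀ x)) := by
  choose K hK hfK using fun i ↦ isStarProjection_iff_eq_starProjection.1 (hf i)
  have hKanti : Antitone K := fun i j hij ↦ by
    rw [← Submodule.starProjection_le_starProjection_iff, ← hfK, ← hfK]
    exact hanti hij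
  have hKperp : Monotone fun i ↦ (K i)ᗮ := fun _ _ hij ↦ Submodule.orthogonal_le (hKanti hij)
  let N := (⨆ i, (K i)ᗮ).topologicalClosure
  have : CompleteSpace N := Submodule.isClosed_topologicalClosure _ |>.completeSpace_coe
  have hNK (i : ι) : Nᗮ ≤ K i := by
    rw [← (K i).orthogonal_orthogonal]
    exact Submodule.orthogonal_le
      ((le_iSup (fun i ↦ (K i)ᗮ) i).trans (Submodule.le_topologicalClosure _))
  refine ⟨Nᗮ.starProjection, isStarProjection_starProjection, fun i ↦ ?_, fun x ↦ ?_⟩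
  · rw [hfK, Submodule.starProjection_le_starProjection_iff]
    exact hNK i
  · have hlim := Submodule.starProjection_tendsto_closure_iSup (fun i ↦ (K i)ᗮ) hKperp x
    rw [Submodule.starProjection_orthogonal']
    simpa [hfK, N] using hlim.const_sub x

end RCLike

theorem norm_add_eq_max_of_star_mul_eq_zero {R : Type*} [CStarAlgebra R] {x y : R}
    (hstar_mul : star x * y = 0) (hmul_star : x * star y = 0) :
    ‖x + y‖ = max ‖x‖ ‖y‖ := by
  have hyx : star y * x = 0 := by simpa using congr(star $hstar_mul)
  have hsq : star (x + y) * (x + y) = star x * x + star y * y := by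
    simp [add_mul, mul_add, hstar_mul, hyx]
  have horth : star x * x * (star y * y) = 0 := by
    rw [mul_assoc, ← mul_assoc x, hmul_star, zero_mul, mul_zero]
  have hmax : ‖x + y‖ ^ 2 = max (‖x‖ ^ 2) (‖y‖ ^ 2) := by
    simp only [sq, ← CStarRing.norm_star_mul_self, hsq]
    exact (IsSelfAdjoint.star_mul_self x).norm_add_eq_max (.star_mul_self y) horth
  rw [← pow_left_monotoneOn.map_max (norm_nonneg x) (norm_nonneg y)] at hmax
  exact (sq_eq_sq₀ (norm_nonneg _) (le_max_of_le_left (norm_nonneg x))).1 hmax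

section Projections

variable {H : Type*} [NormedAddCommGroup H] [InnerProductSpace ℂ H] [CompleteSpace H]

/-- The projections of a von Neumann algebra, that is, its self-adjoint idempotents. -/
def projections (A : VonNeumannAlgebra H) : Set (H →L[ℂ] H) :=
  {p | p ∈ A ∧ IsStarProjection p}

/-- Minimal projections of a von Neumann algebra: the minimal elements among its nonzero
projections, for the operator order. -/
def IsMinimalProjection (A : VonNeumannAlgebra H) (q : H →L[ℂ] H) : Prop :=
  Minimal (fun r ↦ r ∈ projections A ∧ r ≠ 0) q

variable {A : VonNeumannAlgebra H}

theorem IsMinimalProjection.eq_zero_or_eq {q r : H →L[ℂ] H} (hq : IsMinimalProjection A q)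
    (hr : r ∈ projections A) (hrq : r ≤ q) : r = 0 ∨ r = q :=
  or_iff_not_imp_left.2 fun hr_ne ↦ hq.eq_of_le ⟨hr, hr_ne⟩ hrq

theorem sub_mem_projections {f g : H →L[ℂ] H} (hf : f ∈ projections A)
    (hg : g ∈ projections A) (hfg : f ≤ g) : g - f ∈ projections A :=
  ⟨sub_mem hg.1 hf.1, (hf.2.le_iff_sub hg.2).1 hfg⟩

theorem mem_vonNeumannAlgebra_of_tendsto_apply {ι : Type*} {l : Filter ι} [l.NeBot]
    {f : ι → H →L[ℂ] H} {f₀ : H →L[ℂ] H} (hf : ∀ i, f i ∈ A)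
    (hlim : ∀ x, Tendsto (fun i ↦ f i x) l (𝓝 (f₀ x))) : f₀ ∈ A := by
  rw [← A.commutant_commutant, VonNeumannAlgebra.mem_commutant_iff]
  intro y hy
  ext x
  have hcomm (i : ι) : f i (y x) = y (f i x) :=
    congr($(VonNeumannAlgebra.mem_commutant_iff.1 hy (f i) (hf i)) x)
  have hlim_comm := (hlim (y x)).congr hcomm
  exact tendsto_nhds_unique ((y.continuous.tendsto _).comp (hlim x)) hlim_comm

theorem exists_projection_lowerBound_norm_sub_apply_lt {c : Set (H →L[ℂ] H)}
    (hc : c ⊆ projections A) (hne : c.Nonempty) (hdir : DirectedOn (· ≥ ·) c) :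
    ∃ f₀ ∈ projections A, f₀ ∈ lowerBounds c ∧
      ∀ ξ, ∀ δ > 0, ∃ f ∈ c, ‖(f - f₀) ξ‖ < δ := by
  have : Nonempty cᵒᵈ := hne.to_subtype
  have : IsDirectedOrder cᵒᵈ := ⟨directedOn_iff_directed.1 hdir⟩
  let f : cᵒᵈ → H →L[ℂ] H := fun i ↦ (OrderDual.ofDual i).1
  have hf (i : cᵒᵈ) : f i ∈ projections A := hc (OrderDual.ofDual i).2
  obtain ⟨f₀, hf₀, hle, hlim⟩ :=
    exists_isStarProjection_tendsto_apply_of_antitone (fun i ↦ (hf i).2) (f := f) fun _ _ hij ↦ hij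
  refine ⟨f₀, ⟨mem_vonNeumannAlgebra_of_tendsto_apply (fun i ↦ (hf i).1) hlim, hf₀⟩,
    fun g hg ↦ hle (OrderDual.toDual ⟨g, hg⟩), fun ξ δ hδ ↦ ?_⟩
  obtain ⟨i, hi⟩ := ((Metric.tendsto_nhds.1 (hlim ξ)) δ hδ).exists
  exact ⟨f i, (OrderDual.ofDual i).2, by rwa [dist_eq_norm] at hi⟩

section SmallProjections

variable {small : (H →L[ℂ] H) → Prop}

theorem exists_minimal_not_small_le {ξ : H} {δ : ℝ} (hδ : 0 < δ)
    (small_of_norm_lt : ∀ f ∈ projections A, ‖f ξ‖ < δ → small f)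
    (small_of_sub : ∀ f ∈ projections A, ∀ g ∈ projections A, f ≤ g →
      small f → small (g - f) → small g)
    {e : H →L[ℂ] H} (he : e ∈ projections A) (he_large : ¬ small e) :
    ∃ m ≤ e, Minimal (fun f ↦ f ∈ projections A ∧ ¬ small f) m := by
  refine zorn_le_nonempty₀ (α := (H →L[ℂ] H)ᵒᵈ) {f | f ∈ projections A ∧ ¬ small f}
    (fun c hc hchain g hg ↦ ?_) e ⟨he, he_large⟩
  obtain ⟨f₀, hf₀, hle, happrox⟩ := exists_projection_lowerBound_norm_sub_apply_lt (c := c)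
    (fun f hf ↦ (hc hf).1) ⟨g, hg⟩ hchain.directedOn
  refine ⟨f₀, ⟨hf₀, fun hf₀_small ↦ ?_⟩, fun f hf ↦ hle hf⟩
  obtain ⟨f, hfc, hfδ⟩ := happrox ξ δ hδ
  have hf := (hc hfc).1
  have hdiff_small := small_of_norm_lt _ (sub_mem_projections hf₀ hf (hle hfc)) hfδ
  exact (hc hfc).2 (small_of_sub f₀ hf₀ f hf (hle hfc) hf₀_small hdiff_small)

theorem isMinimalProjection_of_minimal_not_small (small_zero : small 0)
    (small_of_sub : ∀ f ∈ projections A, ∀ g ∈ projections A, f ≤ g →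
      small f → small (g - f) → small g)
    {m : H →L[ℂ] H} (hm : Minimal (fun f ↦ f ∈ projections A ∧ ¬ small f) m) :
    IsMinimalProjection A m := by
  obtain ⟨hmA, hm_large⟩ := hm.prop
  have hm_ne : m ≠ 0 := by rintro rfl; exact hm_large small_zero
  refine ⟨⟨hmA, hm_ne⟩, fun r ⟨hr, hr_ne⟩ hrm ↦ ?_⟩
  by_contra hmr
  have small_of_lt {f} (hf : f ∈ projections A) (hlt : f < m) : small f := by
    by_contra hf_large
    exact hm.not_prop_of_lt hlt ⟨hf, hf_large⟩
  have hsub_lt : m - r < m :=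
    (sub_le_self m hr.2.nonneg).lt_of_ne fun h ↦ hr_ne (sub_eq_self.1 h)
  exact hm_large <| small_of_sub r hr m hmA hrm (small_of_lt hr (lt_of_le_not_ge hrm hmr))
    (small_of_lt (sub_mem_projections hr hmA hrm) hsub_lt)

end SmallProjections

theorem norm_mul_eq_max_of_mem_commutant {a f g : H →L[ℂ] H} (ha : a ∈ A.commutant)
    (hf : f ∈ projections A) (hg : g ∈ projections A) (hfg : f ≤ g) :
    ‖a * g‖ = max ‖a * f‖ ‖a * (g - f)‖ := by
  have hcomm := VonNeumannAlgebra.mem_commutant_iff.1 ha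
  have hsub := sub_mem_projections hf hg hfg
  have horth : f * (g - f) = 0 := by
    rw [mul_sub, (hf.2.le_iff_mul_eq_left hg.2).1 hfg, hf.2.isIdempotentElem.eq, sub_self]
  rw [← norm_add_eq_max_of_star_mul_eq_zero (x := a * f) (y := a * (g - f)), ← mul_add,
    add_sub_cancel]
  · rw [← hcomm f hf.1, ← hcomm _ hsub.1, star_mul, hf.2.isSelfAdjoint.star_eq, mul_assoc,
      ← mul_assoc f, horth, zero_mul, mul_zero]
  · rw [star_mul, hsub.2.isSelfAdjoint.star_eq, mul_assoc, ← mul_assoc f, horth, zero_mul,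
      mul_zero]

theorem exists_isMinimalProjection_le_of_norm_mul_le {a e : H →L[ℂ] H} {ξ : H} {C : ℝ}
    (ha : a ∈ A.commutant) (hbound : ∀ f ∈ projections A, ‖a * f‖ ≤ C * ‖f ξ‖ ^ 2)
    (he : e ∈ projections A) (hae : a * e ≠ 0) :
    ∃ q ≤ e, IsMinimalProjection A q := by
  obtain ⟨ε, hε, hεe⟩ := exists_between (norm_pos_iff.2 hae)
  have hlim : Tendsto (fun t : ℝ ↦ C * t ^ 2) (𝓝 0) (𝓝 0) :=
    Continuous.tendsto' (by fun_prop) _ _ (by simp)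
  obtain ⟨δ, hδ, hCδ⟩ := Metric.eventually_nhds_iff.1 (hlim.eventually_lt_const hε)
  have small_of_norm_lt (f) (hf : f ∈ projections A) (hfδ : ‖f ξ‖ < δ) : ‖a * f‖ ≤ ε :=
    (hbound f hf).trans (hCδ (by simpa using hfδ)).le
  have small_of_sub (f) (hf : f ∈ projections A) (g) (hg : g ∈ projections A) (hfg : f ≤ g)
      (hf_small : ‖a * f‖ ≤ ε) (hsub_small : ‖a * (g - f)‖ ≤ ε) : ‖a * g‖ ≤ ε := by
    rw [norm_mul_eq_max_of_mem_commutant ha hf hg hfg]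
    exact max_le hf_small hsub_small
  obtain ⟨m, hme, hm⟩ := exists_minimal_not_small_le hδ small_of_norm_lt small_of_sub he hεe.not_ge
  exact ⟨m, hme, isMinimalProjection_of_minimal_not_small (by simpa using hε.le) small_of_sub hm⟩

theorem faithful_expectation_atomic_general (E : (H →L[ℂ] H) →L[ℂ] (H →L[ℂ] H))
    (hcomm : ∀ x, E x ∈ A.commutant)
    (hcompress : ∀ f ∈ projections A, ∀ x, E (f * x * f) = f * E x * f)
    (hfaithful : ∀ v, E (rankOne ℂ v v) = 0 → v = 0)
    {e : H →L[ℂ] H} (he : e ∈ projections A) (he_ne : e ≠ 0) :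
    ∃ q ≤ e, IsMinimalProjection A q := by
  obtain ⟨ξ, hξ⟩ : ∃ ξ, e ξ ≠ 0 := by simpa using DFunLike.ne_iff.1 he_ne
  have hE (f) (hf : f ∈ projections A) :
      E (rankOne ℂ ξ ξ) * f = E (rankOne ℂ (f ξ) (f ξ)) := by
    rw [← mul_rankOne_mul_star, hf.2.isSelfAdjoint.star_eq, hcompress f hf,
      VonNeumannAlgebra.mem_commutant_iff.1 (hcomm _) f hf.1, mul_assoc, hf.2.isIdempotentElem.eq]
  refine exists_isMinimalProjection_le_of_norm_mul_le (ξ := ξ) (C := ‖E‖)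
    (hcomm (rankOne ℂ ξ ξ)) (fun f hf ↦ ?_) he fun h ↦ hξ (hfaithful _ (hE e he ▸ h))
  rw [hE f hf, sq, ← norm_rankOne (𝕜 := ℂ)]
  exact E.le_opNorm _

end Projections

/-- Let `A ⊆ B(H)` be a commutative von Neumann subalgebra (a unital
*-subalgebra equal to its double commutant). Suppose there exists a faithful conditional
expectation `E : B(H) → A`. Then `A` is atomic: every nonzero projection `e ∈ A` dominates
a minimal projection of `A`. -/
theorem faithful_expectation_atomic
    {H : Type*} [NormedAddCommGroup H] [InnerProductSpace ℂ H] [CompleteSpace H]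
    (A : StarSubalgebra ℂ (H →L[ℂ] H))
    (hvN : Set.centralizer (Set.centralizer (A : Set (H →L[ℂ] H))) = (A : Set (H →L[ℂ] H)))
    (hAcomm : ∀ a ∈ A, ∀ b ∈ A, a * b = b * a)
    (E : (H →L[ℂ] H) →ₗ[ℂ] (H →L[ℂ] H))
    (hErange : ∀ x : H →L[ℂ] H, E x ∈ A)
    (hEproj : ∀ a ∈ A, E a = a)
    (hEpos : ∀ x : H →L[ℂ] H, 0 ≤ x → 0 ≤ E x)
    (hEbimod : ∀ a ∈ A, ∀ b ∈ A, ∀ x : H →L[ℂ] H, E (a * x * b) = a * E x * b)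
    (hEfaithful : ∀ x : H →L[ℂ] H, 0 ≤ x → E x = 0 → x = 0) :
    ∀ e ∈ A, IsSelfAdjoint e → IsIdempotentElem e → e ≠ 0 →
      ∃ q ∈ A, IsSelfAdjoint q ∧ IsIdempotentElem q ∧ q ≠ 0 ∧ q ≤ e ∧
        (∀ r ∈ A, IsSelfAdjoint r → IsIdempotentElem r → r ≤ q → r = 0 ∨ r = q) := by
  intro e heA he_sa he_idem he_ne
  let Epos : (H →L[ℂ] H) →ₚ[ℂ] (H →L[ℂ] H) := .mk₀ E hEpos
  let Econt : (H →L[ℂ] H) →L[ℂ] (H →L[ℂ] H) := ⟨E, map_continuous Epos⟩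
  let M : VonNeumannAlgebra H := ⟨A, hvN⟩
  have hcomm (x) : Econt x ∈ M.commutant :=
    VonNeumannAlgebra.mem_commutant_iff.2 fun a ha ↦ hAcomm a ha _ (hErange x)
  have hrankOne (v) (hv : Econt (rankOne ℂ v v) = 0) : v = 0 := by
    have hnonneg : 0 ≤ rankOne ℂ v v :=
      (ContinuousLinearMap.nonneg_iff_isPositive _).2 (isPositive_rankOne_self v)
    simpa using hEfaithful _ hnonneg hv
  obtain ⟨q, hqe, hq⟩ := faithful_expectation_atomic_general Econt hcomm
    (fun f hf ↦ hEbimod f hf.1 f hf.1) hrankOne ⟨heA, he_idem, he_sa⟩ he_ne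
  obtain ⟨⟨hqA, hqP⟩, hq_ne⟩ := hq.prop
  exact ⟨q, hqA, hqP.isSelfAdjoint, hqP.isIdempotentElem, hq_ne, hqe,
    fun r hrA hr_sa hr_idem hrq ↦ hq.eq_zero_or_eq ⟨hrA, hr_idem, hr_sa⟩ hrq⟩
end

section
/- Let H be a complex Hilbert space and let A ⊆ B(H) be a commutative unital norm-closed *-subalgebra admitting a faithful conditional expectation E : B(H) → A. Then there exist a set X, a family (p_x)_{x∈X} of pairwise orthogonal minimal projections of A with p_x p_y = 0 for x ≠ y and ∑_{x∈X} p_x ξ = ξ (convergence as an unconditional sum in H) for every ξ ∈ H, and an orthonormal family (ξ_x)_{x∈X} in H with ξ_x in the range of p_x for each x; in particular the cardinality of X is at most the Hilbert dimension of H, and A is *-isomorphic to ℓ∞(X), the C*-algebra of bounded complex-valued functions on X. -/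
/-!
By Gelfand duality `A` is the image of an injective representation `π` of `C(Ω)` with `Ω` compact
Hausdorff; the index set `X` is the set of isolated points of `Ω`, and `p_x` is the image under `π`
of the characteristic function of `x`.

For a vector `v ≠ 0` write `E(|v⟩⟨v|) = π g`, which is nonzero by faithfulness. The bimodule
property gives `π (f g f*) = E(|π f v⟩⟨π f v|)`, hence `|f(ω)|² |g(ω)| ≤ ‖π f v‖²`. Testing this
against bump functions with disjoint supports, whose images of `v` are orthogonal, shows that
`{|g| ≥ ε}` has at most `‖v‖² / ε` points. So each point where `g` is nonzero is isolated, and there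
`p_x v ≠ 0`. The `p_x` therefore separate vectors, which makes them sum to the identity and makes
restriction of functions to `X` injective. It is onto `ℓ∞(X)` because `E (∑ c_x p_x)` lies in `A`
and restricts to `c`.
-/

open InnerProductSpace
open scoped Function NNReal

universe u

theorem mul_eq_mul_of_forall_hasSum_apply {R M ι : Type*} [Semiring R] [AddCommMonoid M]
    [TopologicalSpace M] [T2Space M] [Module R M] {T S : M →L[R] M} {t : ι → M →L[R] M}
    (hT : ∀ v, HasSum (fun i => t i v) (T v)) {j : ι} (hS : ∀ i ≠ j, S * t i = 0) :
    S * T = S * t j := by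
  ext v
  exact ((hT v).mapL S).unique (hasSum_single j fun i hij => DFunLike.congr_fun (hS i hij) v)

theorem exists_norm_eq_one_apply_eq {𝕜 M : Type*} [RCLike 𝕜] [NormedAddCommGroup M]
    [NormedSpace 𝕜 M] {P : M →L[𝕜] M} (hP : IsIdempotentElem P) (hP0 : P ≠ 0) :
    ∃ v, ‖v‖ = 1 ∧ P v = v := by
  obtain ⟨w, hw⟩ : ∃ w, P w ≠ 0 := DFunLike.ne_iff.1 hP0
  refine ⟨(‖P w‖⁻¹ : 𝕜) • P w, norm_smul_inv_norm hw, ?_⟩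
  rw [map_smul, ← mul_apply_eq_comp, hP]

section RankOne

variable {H : Type*} [NormedAddCommGroup H] [InnerProductSpace ℂ H]

theorem rankOne_self_nonneg (v : H) : 0 ≤ rankOne ℂ v v :=
  (ContinuousLinearMap.nonneg_iff_isPositive _).2 (isPositive_rankOne_self v)

theorem mul_rankOne_mul_star_s2 [CompleteSpace H] (S : H →L[ℂ] H) (v : H) :
    S * rankOne ℂ v v * star S = rankOne ℂ (S v) (S v) := by
  rw [ContinuousLinearMap.mul_def, ContinuousLinearMap.mul_def, ContinuousLinearMap.star_eq_adjoint,
    comp_rankOne, rankOne_comp, ContinuousLinearMap.adjoint_adjoint]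

end RankOne

section OrthogonalElements

variable {A H ι : Type*} [CommCStarAlgebra A] [NormedAddCommGroup H] [InnerProductSpace ℂ H]
  [CompleteSpace H] (π : A →⋆ₐ[ℂ] (H →L[ℂ] H)) {a : ι → A}

theorem star_mul_eq_zero_of_mul_eq_zero {b c : A} (hbc : b * c = 0) : star b * c = 0 := by
  rw [← CStarRing.star_mul_self_eq_zero_iff, star_mul, star_star]
  calc star c * b * (star b * c) = star c * star b * (b * c) := by ring
    _ = 0 := by rw [hbc, mul_zero]

theorem inner_map_apply_eq_zero {b c : A} (hbc : b * c = 0) (v w : H) :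
    inner ℂ (π b v) (π c w) = 0 := by
  rw [← ContinuousLinearMap.adjoint_inner_right, ← ContinuousLinearMap.star_eq_adjoint, ← map_star,
    ← mul_apply_eq_comp, ← map_mul, star_mul_eq_zero_of_mul_eq_zero hbc, map_zero, zero_apply,
    inner_zero_right]

theorem orthogonalFamily_range_map (ha : Pairwise ((· * · = 0) on a)) :
    OrthogonalFamily ℂ (fun i => (π (a i)).range) fun i => (π (a i)).range.subtypeₗᵢ := by
  rintro i j hij ⟨_, v, rfl⟩ ⟨_, w, rfl⟩
  exact inner_map_apply_eq_zero π (ha hij) v w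

theorem nnnorm_sum_map_le (ha : Pairwise ((· * · = 0) on a)) {C : ℝ≥0} (hC : ∀ i, ‖a i‖₊ ≤ C)
    (s : Finset ι) : ‖∑ i ∈ s, π (a i)‖₊ ≤ C :=
  calc ‖∑ i ∈ s, π (a i)‖₊ = ‖π (∑ i ∈ s, a i)‖₊ := by rw [map_sum]
    _ ≤ ‖∑ i ∈ s, a i‖₊ := NonUnitalStarAlgHom.nnnorm_apply_le π _
    _ = s.sup (‖a ·‖₊) := CommCStarAlgebra.nnnorm_sum_eq_sup s ha
    _ ≤ C := Finset.sup_le fun i _ => hC i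

theorem sum_norm_sq_map_apply_le (ha : Pairwise ((· * · = 0) on a)) {C : ℝ≥0}
    (hC : ∀ i, ‖a i‖₊ ≤ C) (s : Finset ι) (v : H) :
    ∑ i ∈ s, ‖π (a i) v‖ ^ 2 ≤ (C * ‖v‖) ^ 2 :=
  calc ∑ i ∈ s, ‖π (a i) v‖ ^ 2 = ‖∑ i ∈ s, π (a i) v‖ ^ 2 :=
        ((orthogonalFamily_range_map π ha).norm_sum (fun i => ⟨π (a i) v, v, rfl⟩) s).symm
    _ = ‖(∑ i ∈ s, π (a i)) v‖ ^ 2 := by rw [sum_apply]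
    _ ≤ (C * ‖v‖) ^ 2 := by
        gcongr
        exact (∑ i ∈ s, π (a i)).le_of_opNorm_le (nnnorm_sum_map_le π ha hC s) v

theorem summable_map_apply (ha : Pairwise ((· * · = 0) on a)) {C : ℝ≥0} (hC : ∀ i, ‖a i‖₊ ≤ C)
    (v : H) : Summable fun i => π (a i) v :=
  ((orthogonalFamily_range_map π ha).summable_iff_norm_sq_summable
    fun i => ⟨π (a i) v, v, rfl⟩).2 <|
    summable_of_sum_le (fun _ => sq_nonneg _) fun s => sum_norm_sq_map_apply_le π ha hC s v

theorem exists_forall_hasSum_map_apply (ha : Pairwise ((· * · = 0) on a)) {C : ℝ≥0}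
    (hC : ∀ i, ‖a i‖₊ ≤ C) : ∃ T : H →L[ℂ] H, ∀ v, HasSum (fun i => π (a i) v) (T v) := by
  have hsum (v : H) := (summable_map_apply π ha hC v).hasSum
  have hlim : Filter.Tendsto (fun (s : Finset ι) v => (∑ i ∈ s, π (a i)) v) Filter.atTop
      (nhds fun v => ∑' i, π (a i) v) := by
    refine tendsto_pi_nhds.2 fun v => ?_
    simpa only [sum_apply, HasSum, SummationFilter.unconditional_filter] using hsum v
  have hbdd : Bornology.IsBounded (Set.range fun s : Finset ι => ∑ i ∈ s, π (a i)) :=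
    isBounded_iff_forall_norm_le.2 ⟨C, Set.forall_mem_range.2 (nnnorm_sum_map_le π ha hC)⟩
  exact ⟨.ofTendstoOfBoundedRange _ _ hlim hbdd, hsum⟩

end OrthogonalElements

section Gelfand

theorem exists_injective_starAlgHom_range_eq {B : Type u} [CStarAlgebra B] (A : StarSubalgebra ℂ B)
    (hAclosed : IsClosed (A : Set B)) (hAcomm : ∀ a ∈ A, ∀ b ∈ A, a * b = b * a) :
    ∃ (Ω : Type u) (_ : TopologicalSpace Ω) (_ : CompactSpace Ω) (_ : T2Space Ω)
      (π : C(Ω, ℂ) →⋆ₐ[ℂ] B), Function.Injective π ∧ π.range = A := by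
  have := hAclosed
  let _ : CommCStarAlgebra A :=
    { (inferInstance : CStarAlgebra A) with
      mul_comm := fun a b => Subtype.ext (hAcomm a a.2 b b.2) }
  let e := (gelfandStarTransform A).symm
  refine ⟨WeakDual.characterSpace ℂ A, inferInstance, inferInstance, inferInstance,
    A.subtype.comp (e : C(WeakDual.characterSpace ℂ A, ℂ) →⋆ₐ[ℂ] A),
    Subtype.val_injective.comp e.injective, ?_⟩
  ext b
  constructor
  · rintro ⟨f, rfl⟩
    exact (e f).2
  · intro hb
    exact ⟨e.symm ⟨b, hb⟩, congrArg Subtype.val (e.apply_symm_apply ⟨b, hb⟩)⟩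

end Gelfand

section BumpFunctions

variable {Ω ι : Type*} [TopologicalSpace Ω] [CompactSpace Ω] [T2Space Ω]

theorem exists_apply_eq_one_norm_le_one_support_subset {U : Set Ω} (hU : IsOpen U) {x : Ω}
    (hx : x ∈ U) : ∃ f : C(Ω, ℂ), f x = 1 ∧ ‖f‖ ≤ 1 ∧ Function.support f ⊆ U := by
  obtain ⟨f, hf0, hf1, hf01⟩ := exists_continuous_zero_one_of_isClosed hU.isClosed_compl
    isClosed_singleton (by simpa using hx : Disjoint Uᶜ {x})
  refine ⟨⟨fun y => (f y : ℂ), by fun_prop⟩, ?_, ?_, ?_⟩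
  · simp [hf1 rfl]
  · refine (ContinuousMap.norm_le _ zero_le_one).2 fun y => ?_
    simpa [abs_of_nonneg (hf01 y).1] using (hf01 y).2
  · intro y hy
    by_contra hyU
    simp [hf0 hyU] at hy

theorem exists_pairwise_mul_eq_zero_apply_eq_one [Finite ι] {x : ι → Ω} (hx : x.Injective) :
    ∃ f : ι → C(Ω, ℂ), Pairwise ((· * · = 0) on f) ∧ ∀ i, f i (x i) = 1 ∧ ‖f i‖ ≤ 1 := by
  obtain ⟨U, hU, hdisj⟩ := (Set.finite_range x).t2_separation
  choose f hf1 hfle hfsupp using fun i =>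
    exists_apply_eq_one_norm_le_one_support_subset (hU (x i)).2 (hU (x i)).1
  refine ⟨f, fun i j hij => ?_, fun i => ⟨hf1 i, hfle i⟩⟩
  have hUij : Disjoint (U (x i)) (U (x j)) := hdisj ⟨i, rfl⟩ ⟨j, rfl⟩ (hx.ne hij)
  ext y
  by_contra hy
  exact hUij.le_bot ⟨hfsupp i (left_ne_zero_of_mul hy), hfsupp j (right_ne_zero_of_mul hy)⟩

end BumpFunctions

section IsolatedPoints

/-- The isolated points of a topological space, as a type that indexes families of projections. -/
abbrev IsolatedPoint (Ω : Type*) [TopologicalSpace Ω] : Type _ :=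
  {ω : Ω // IsOpen {ω}}

variable {Ω : Type*} [TopologicalSpace Ω]

namespace IsolatedPoint

variable [T1Space Ω]

/-- The characteristic function of an isolated point, a minimal projection of `C(Ω, ℂ)`. -/
noncomputable def charFn (x : IsolatedPoint Ω) : C(Ω, ℂ) :=
  LocallyConstant.charFn ℂ ⟨isClosed_singleton, x.2⟩

theorem charFn_apply_self (x : IsolatedPoint Ω) : x.charFn x = 1 :=
  Set.indicator_of_mem (Set.mem_singleton x.1) 1

theorem charFn_apply_of_ne (x : IsolatedPoint Ω) {ω : Ω} (hω : ω ≠ x) : x.charFn ω = 0 :=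
  Set.indicator_of_notMem hω 1

theorem mul_charFn (f : C(Ω, ℂ)) (x : IsolatedPoint Ω) : f * x.charFn = f x • x.charFn := by
  ext ω
  by_cases hω : ω = x
  · simp [hω]
  · simp [charFn_apply_of_ne x hω]

theorem charFn_ne_zero (x : IsolatedPoint Ω) : x.charFn ≠ 0 := fun h => by
  simpa [h] using x.charFn_apply_self

theorem isStarProjection_charFn (x : IsolatedPoint Ω) : IsStarProjection x.charFn := by
  refine ⟨?_, ?_⟩
  · rw [IsIdempotentElem, mul_charFn, charFn_apply_self, one_smul]
  · ext ω
    by_cases hω : ω = x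
    · simp [hω, charFn_apply_self]
    · simp [charFn_apply_of_ne x hω]

theorem pairwise_charFn_mul_charFn_eq_zero :
    Pairwise ((· * · = 0) on (charFn : IsolatedPoint Ω → C(Ω, ℂ))) := fun x y hxy => by
  change x.charFn * y.charFn = 0
  rw [mul_charFn, x.charFn_apply_of_ne (Subtype.coe_ne_coe.2 hxy.symm)]
  exact zero_smul ℂ y.charFn

theorem eq_zero_or_eq_charFn {f : C(Ω, ℂ)} (hf : IsIdempotentElem f) {x : IsolatedPoint Ω}
    (hfx : f * x.charFn = f) : f = 0 ∨ f = x.charFn := by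
  rw [mul_charFn] at hfx
  have hfx_idem : IsIdempotentElem (f x) := DFunLike.congr_fun hf x.1
  refine (IsIdempotentElem.iff_eq_zero_or_one.1 hfx_idem).imp (fun h => ?_) fun h => ?_
  · rw [← hfx, h]
    exact zero_smul ℂ x.charFn
  · rw [← hfx, h, one_smul]

end IsolatedPoint

theorem isOpen_singleton_of_finite_setOf_le_norm [T1Space Ω] {F : Type*} [NormedAddCommGroup F]
    {g : Ω → F} (hgc : Continuous g) (hg : ∀ ε > 0, {ω | ε ≤ ‖g ω‖}.Finite) {ω : Ω}
    (hω : g ω ≠ 0) : IsOpen {ω} := by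
  have hhalf : ‖g ω‖ / 2 < ‖g ω‖ := half_lt_self (norm_pos_iff.2 hω)
  have hnhds : {ω' | ‖g ω‖ / 2 < ‖g ω'‖} ∈ nhds ω :=
    (isOpen_lt continuous_const hgc.norm).mem_nhds hhalf
  exact isOpen_singleton_of_finite_mem_nhds ω hnhds
    ((hg (‖g ω‖ / 2) (by positivity)).subset fun _ => le_of_lt (α := ℝ))

/-- The evaluation of continuous functions on a compact space at a family of points, as a
homomorphism into the algebra of bounded functions on the index set. -/
noncomputable def compLpInfty [CompactSpace Ω] {X : Type*} (e : X → Ω) :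
    C(Ω, ℂ) →⋆ₐ[ℂ] lp (fun _ : X => ℂ) ⊤ where
  toFun f := ⟨f ∘ e, memℓp_infty ⟨‖f‖, Set.forall_mem_range.2 fun x => f.norm_coe_le_norm (e x)⟩⟩
  map_one' := rfl
  map_mul' _ _ := rfl
  map_zero' := rfl
  map_add' _ _ := rfl
  commutes' _ := rfl
  map_star' _ := rfl

end IsolatedPoints

section Representation

variable {Ω H : Type*} [TopologicalSpace Ω] [T1Space Ω] [NormedAddCommGroup H]
  [InnerProductSpace ℂ H] [CompleteSpace H] {π : C(Ω, ℂ) →⋆ₐ[ℂ] (H →L[ℂ] H)}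

namespace IsolatedPoint

theorem eq_zero_or_eq_map_charFn_of_le (hπ : Function.Injective π) (x : IsolatedPoint Ω)
    {r : H →L[ℂ] H} (hrange : r ∈ π.range) (hr : IsStarProjection r) (hle : r ≤ π x.charFn) :
    r = 0 ∨ r = π x.charFn := by
  obtain ⟨f, rfl : π f = r⟩ := hrange
  have hf : IsIdempotentElem f := hπ (by rw [map_mul, hr.isIdempotentElem])
  have hfx : f * x.charFn = f := hπ <| by
    rw [map_mul, (hr.le_iff_mul_eq_left (x.isStarProjection_charFn.map π)).1 hle]
  exact (eq_zero_or_eq_charFn hf hfx).imp (fun h => by rw [h, map_zero]) (congrArg π)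

variable [CompactSpace Ω]

theorem exists_orthonormal_map_charFn_apply_eq (hπ : Function.Injective π) :
    ∃ ξ : IsolatedPoint Ω → H, Orthonormal ℂ ξ ∧ ∀ x, π x.charFn (ξ x) = ξ x := by
  choose ξ hnorm hfix using fun x : IsolatedPoint Ω => exists_norm_eq_one_apply_eq
    (x.isStarProjection_charFn.map π).isIdempotentElem
    ((map_ne_zero_iff π hπ).2 x.charFn_ne_zero)
  refine ⟨ξ, ⟨hnorm, fun x y hxy => ?_⟩, hfix⟩
  change inner ℂ (ξ x) (ξ y) = 0
  rw [← hfix x, ← hfix y]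
  exact inner_map_apply_eq_zero π (pairwise_charFn_mul_charFn_eq_zero hxy) _ _

theorem exists_hasSum_smul_map_charFn_apply (π : C(Ω, ℂ) →⋆ₐ[ℂ] (H →L[ℂ] H))
    (c : lp (fun _ : IsolatedPoint Ω => ℂ) ⊤) :
    ∃ T : H →L[ℂ] H, (∀ v, HasSum (fun x => c x • π x.charFn v) (T v)) ∧
      ∀ x, π x.charFn * T = c x • π x.charFn := by
  have horth : Pairwise ((· * · = 0) on fun x => c x • x.charFn) := fun x y hxy => by
    change c x • x.charFn * c y • y.charFn = 0
    rw [smul_mul_smul_comm, pairwise_charFn_mul_charFn_eq_zero hxy, smul_zero]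
  have hbound (x) : ‖c x • x.charFn‖₊ ≤ ‖c‖₊ :=
    calc ‖c x • x.charFn‖ ≤ ‖c x‖ * 1 :=
          (norm_smul_le _ _).trans (by gcongr; exact x.isStarProjection_charFn.norm_le)
      _ ≤ ‖c‖ := by simpa using lp.norm_apply_le_norm (by simp) c x
  obtain ⟨T, hT⟩ := exists_forall_hasSum_map_apply π horth hbound
  refine ⟨T, fun v => by simpa using hT v, fun x => ?_⟩
  have hoff (y) (hyx : y ≠ x) : π x.charFn * π (c y • y.charFn) = 0 := by
    rw [← map_mul, mul_smul_comm, pairwise_charFn_mul_charFn_eq_zero hyx.symm, smul_zero, map_zero]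
  rw [mul_eq_mul_of_forall_hasSum_apply hT hoff, map_smul, mul_smul_comm,
    (x.isStarProjection_charFn.map π).isIdempotentElem]

end IsolatedPoint

end Representation

/-- A faithful conditional expectation of `B` onto the star subalgebra `A`, encoded as a linear
endomorphism of `B` with values in `A`. -/
structure IsFaithfulCondExp {B : Type*} [Ring B] [PartialOrder B] [StarRing B] [Algebra ℂ B]
    [StarModule ℂ B] (A : StarSubalgebra ℂ B) (E : B →ₗ[ℂ] B) : Prop where
  apply_mem : ∀ x, E x ∈ A
  apply_of_mem : ∀ a ∈ A, E a = a
  nonneg : ∀ x, 0 ≤ x → 0 ≤ E x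
  bimodule : ∀ a ∈ A, ∀ b ∈ A, ∀ x, E (a * x * b) = a * E x * b
  faithful : ∀ x, 0 ≤ x → E x = 0 → x = 0

namespace IsFaithfulCondExp

theorem norm_apply_le {B : Type*} [CStarAlgebra B] [PartialOrder B] [StarOrderedRing B]
    {A : StarSubalgebra ℂ B} {E : B →ₗ[ℂ] B} (hE : IsFaithfulCondExp A E) {x : B} (hx : 0 ≤ x) :
    ‖E x‖ ≤ ‖x‖ := by
  have hmono := PositiveLinearMap.norm_apply_le_of_nonneg (.mk₀ E hE.nonneg) x hx
  change ‖E x‖ ≤ ‖E 1‖ * ‖x‖ at hmono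
  rw [hE.apply_of_mem 1 (one_mem A)] at hmono
  nontriviality B
  simpa using hmono

variable {Ω H : Type*} [TopologicalSpace Ω] [CompactSpace Ω] [NormedAddCommGroup H]
  [InnerProductSpace ℂ H] [CompleteSpace H] {π : C(Ω, ℂ) →⋆ₐ[ℂ] (H →L[ℂ] H)}
  {E : (H →L[ℂ] H) →ₗ[ℂ] (H →L[ℂ] H)}

theorem norm_sq_mul_norm_le (hE : IsFaithfulCondExp π.range E) (hπ : Function.Injective π)
    {g : C(Ω, ℂ)} {v : H} (hg : π g = E (rankOne ℂ v v)) (f : C(Ω, ℂ)) (ω : Ω) :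
    ‖f ω‖ ^ 2 * ‖g ω‖ ≤ ‖π f v‖ ^ 2 := by
  have hcompress : π (f * g * star f) = E (rankOne ℂ (π f v) (π f v)) := by
    have hf : π f ∈ π.range := ⟨f, rfl⟩
    rw [map_mul, map_mul, hg, map_star, ← hE.bimodule _ hf _ (star_mem hf), mul_rankOne_mul_star_s2]
  calc ‖f ω‖ ^ 2 * ‖g ω‖ = ‖(f * g * star f) ω‖ := by
        simp only [ContinuousMap.mul_apply, ContinuousMap.star_apply, norm_mul, norm_star]
        ring
    _ ≤ ‖f * g * star f‖ := ContinuousMap.norm_coe_le_norm _ ω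
    _ = ‖E (rankOne ℂ (π f v) (π f v))‖ := by
        rw [← hcompress, NonUnitalStarAlgHom.norm_map π hπ]
    _ ≤ ‖rankOne ℂ (π f v) (π f v)‖ := hE.norm_apply_le (rankOne_self_nonneg _)
    _ = ‖π f v‖ ^ 2 := by rw [norm_rankOne, sq]

variable [T2Space Ω]

theorem card_mul_le_norm_sq (hE : IsFaithfulCondExp π.range E) (hπ : Function.Injective π)
    {g : C(Ω, ℂ)} {v : H} (hg : π g = E (rankOne ℂ v v)) {ε : ℝ} {s : Finset Ω}
    (hs : ∀ ω ∈ s, ε ≤ ‖g ω‖) : s.card * ε ≤ ‖v‖ ^ 2 := by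
  obtain ⟨f, hf0, hf⟩ := exists_pairwise_mul_eq_zero_apply_eq_one
    (Subtype.val_injective : Function.Injective ((↑) : s → Ω))
  calc s.card * ε = ∑ _ω : s, ε := by simp
    _ ≤ ∑ ω : s, ‖π (f ω) v‖ ^ 2 := Finset.sum_le_sum fun ω _ => by
        calc ε ≤ ‖g ω‖ := hs ω ω.2
          _ = ‖f ω ω‖ ^ 2 * ‖g ω‖ := by rw [(hf ω).1, norm_one, one_pow, one_mul]
          _ ≤ ‖π (f ω) v‖ ^ 2 := hE.norm_sq_mul_norm_le hπ hg (f ω) ω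
    _ ≤ ((1 : ℝ≥0) * ‖v‖) ^ 2 := sum_norm_sq_map_apply_le π hf0 (fun ω => (hf ω).2) _ v
    _ = ‖v‖ ^ 2 := by simp

theorem finite_setOf_le_norm (hE : IsFaithfulCondExp π.range E) (hπ : Function.Injective π)
    {g : C(Ω, ℂ)} {v : H} (hg : π g = E (rankOne ℂ v v)) {ε : ℝ} (hε : 0 < ε) :
    {ω | ε ≤ ‖g ω‖}.Finite := by
  by_contra hinf
  obtain ⟨n, hn⟩ := exists_nat_gt (‖v‖ ^ 2 / ε)
  obtain ⟨s, hs, hcard⟩ := Set.Infinite.exists_subset_card_eq hinf n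
  have hle := hE.card_mul_le_norm_sq hπ hg hs
  rw [hcard] at hle
  exact hle.not_gt ((div_lt_iff₀ hε).1 hn)

theorem exists_map_charFn_apply_ne_zero (hE : IsFaithfulCondExp π.range E)
    (hπ : Function.Injective π) {v : H} (hv : v ≠ 0) :
    ∃ x : IsolatedPoint Ω, π x.charFn v ≠ 0 := by
  obtain ⟨g, hg : π g = E (rankOne ℂ v v)⟩ := hE.apply_mem (rankOne ℂ v v)
  have hg0 : g ≠ 0 := by
    rintro rfl
    exact rankOne_ne_zero hv hv
      (hE.faithful _ (rankOne_self_nonneg v) (by rw [← hg, map_zero]))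
  obtain ⟨ω, hω⟩ : ∃ ω, g ω ≠ 0 := DFunLike.ne_iff.1 hg0
  let x : IsolatedPoint Ω :=
    ⟨ω, isOpen_singleton_of_finite_setOf_le_norm g.continuous
      (fun _ => hE.finite_setOf_le_norm hπ hg) hω⟩
  refine ⟨x, fun hx => hω ?_⟩
  simpa [hx, show x.charFn ω = 1 from x.charFn_apply_self] using
    hE.norm_sq_mul_norm_le hπ hg x.charFn ω

theorem eq_of_forall_map_charFn_apply_eq (hE : IsFaithfulCondExp π.range E)
    (hπ : Function.Injective π) {v w : H}
    (hvw : ∀ x : IsolatedPoint Ω, π x.charFn v = π x.charFn w) : v = w := by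
  by_contra hne
  obtain ⟨x, hx⟩ := hE.exists_map_charFn_apply_ne_zero hπ (sub_ne_zero.2 hne)
  exact hx (by rw [map_sub, hvw, sub_self])

theorem hasSum_map_charFn_apply (hE : IsFaithfulCondExp π.range E) (hπ : Function.Injective π)
    (v : H) : HasSum (fun x : IsolatedPoint Ω => π x.charFn v) v := by
  obtain ⟨T, hT, hTmul⟩ := IsolatedPoint.exists_hasSum_smul_map_charFn_apply π 1
  have hTv : T v = v := hE.eq_of_forall_map_charFn_apply_eq hπ fun x => by
    simpa using DFunLike.congr_fun (hTmul x) v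
  simpa [hTv] using hT v

theorem injective_compLpInfty (hE : IsFaithfulCondExp π.range E) (hπ : Function.Injective π) :
    Function.Injective (compLpInfty ((↑) : IsolatedPoint Ω → Ω)) := by
  intro f g hfg
  apply hπ
  ext v
  refine hE.eq_of_forall_map_charFn_apply_eq hπ fun x => ?_
  have hfgx : f x = g x := congrFun (congrArg Subtype.val hfg) x
  have hmul : x.charFn * f = x.charFn * g := by
    rw [mul_comm, x.mul_charFn, hfgx, ← x.mul_charFn, mul_comm]
  simp only [← mul_apply_eq_comp, ← map_mul, hmul]

theorem surjective_compLpInfty (hE : IsFaithfulCondExp π.range E) (hπ : Function.Injective π) :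
    Function.Surjective (compLpInfty ((↑) : IsolatedPoint Ω → Ω)) := by
  intro c
  obtain ⟨T, -, hT⟩ := IsolatedPoint.exists_hasSum_smul_map_charFn_apply π c
  obtain ⟨f, hf : π f = E T⟩ := hE.apply_mem T
  refine ⟨f, Subtype.ext (funext fun x : IsolatedPoint Ω => ?_)⟩
  have hsmul : π (f x • x.charFn) = π (c x • x.charFn) := by
    have hx : π x.charFn ∈ π.range := ⟨x.charFn, rfl⟩
    calc π (f x • x.charFn) = π x.charFn * E T := by
          rw [← x.mul_charFn, mul_comm, map_mul, hf]
      _ = E (π x.charFn * T) := by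
          simpa only [mul_one] using (hE.bimodule _ hx 1 (one_mem _) T).symm
      _ = π (c x • x.charFn) := by
          rw [hT, map_smul E, hE.apply_of_mem _ hx, map_smul π]
  exact smul_left_injective ℂ x.charFn_ne_zero (hπ hsmul)

end IsFaithfulCondExp

/-- Let `A ⊆ B(H)` be a commutative unital norm-closed *-subalgebra admitting
a faithful conditional expectation `E : B(H) → A`. Then there exist a set `X`, a family
`(p_x)_{x ∈ X}` of pairwise orthogonal minimal projections of `A` summing to the identity
(as an unconditional sum applied to every vector), and an orthonormal family `(ξ_x)` with
`ξ_x` in the range of `p_x`; in particular `|X| ≤ dim H` and `A ≅ ℓ∞(X)`. -/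
theorem faithful_expectation_ellInfty
    {H : Type u} [NormedAddCommGroup H] [InnerProductSpace ℂ H] [CompleteSpace H]
    (A : StarSubalgebra ℂ (H →L[ℂ] H))
    (hAclosed : IsClosed (A : Set (H →L[ℂ] H)))
    (hAcomm : ∀ a ∈ A, ∀ b ∈ A, a * b = b * a)
    (E : (H →L[ℂ] H) →ₗ[ℂ] (H →L[ℂ] H))
    (hErange : ∀ x : H →L[ℂ] H, E x ∈ A)
    (hEproj : ∀ a ∈ A, E a = a)
    (hEpos : ∀ x : H →L[ℂ] H, 0 ≤ x → 0 ≤ E x)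
    (hEbimod : ∀ a ∈ A, ∀ b ∈ A, ∀ x : H →L[ℂ] H, E (a * x * b) = a * E x * b)
    (hEfaithful : ∀ x : H →L[ℂ] H, 0 ≤ x → E x = 0 → x = 0) :
    ∃ (X : Type u) (p : X → (H →L[ℂ] H)) (ξ : X → H),
      (∀ x, p x ∈ A) ∧
      (∀ x, IsSelfAdjoint (p x)) ∧
      (∀ x, IsIdempotentElem (p x)) ∧
      (∀ x, p x ≠ 0) ∧
      (∀ x, ∀ r ∈ A, IsSelfAdjoint r → IsIdempotentElem r → r ≤ p x → r = 0 ∨ r = p x) ∧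
      (∀ x y, x ≠ y → p x * p y = 0) ∧
      (∀ v : H, HasSum (fun x => p x v) v) ∧
      Orthonormal ℂ ξ ∧
      (∀ x, p x (ξ x) = ξ x) ∧
      Cardinal.mk X ≤ Module.rank ℂ H ∧
      Nonempty (A ≃⋆ₐ[ℂ] lp (fun _ : X => ℂ) ⊤) := by
  obtain ⟨Ω, _, _, _, π, hπ, rfl⟩ := exists_injective_starAlgHom_range_eq A hAclosed hAcomm
  have hE : IsFaithfulCondExp π.range E := ⟨hErange, hEproj, hEpos, hEbimod, hEfaithful⟩
  have hproj (x : IsolatedPoint Ω) := x.isStarProjection_charFn.map π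
  obtain ⟨ξ, hξ, hξfix⟩ := IsolatedPoint.exists_orthonormal_map_charFn_apply_eq hπ
  let restrict := StarAlgEquiv.ofBijective (compLpInfty ((↑) : IsolatedPoint Ω → Ω))
    ⟨hE.injective_compLpInfty hπ, hE.surjective_compLpInfty hπ⟩
  refine ⟨IsolatedPoint Ω, fun x => π x.charFn, ξ, fun x => ⟨x.charFn, rfl⟩,
    fun x => (hproj x).isSelfAdjoint, fun x => (hproj x).isIdempotentElem,
    fun x => (map_ne_zero_iff π hπ).2 x.charFn_ne_zero, ?minimal, ?orthogonal,
    hE.hasSum_map_charFn_apply hπ, hξ, hξfix, hξ.linearIndependent.cardinal_le_rank,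
    ⟨(StarAlgEquiv.ofInjective π hπ).symm.trans restrict⟩⟩
  case minimal =>
    exact fun x r hr hsa hidem hle => x.eq_zero_or_eq_map_charFn_of_le hπ hr ⟨hidem, hsa⟩ hle
  case orthogonal =>
    intro x y hxy
    rw [← map_mul, IsolatedPoint.pairwise_charFn_mul_charFn_eq_zero hxy, map_zero]
end

section
/- Let H be a complex Hilbert space, X an infinite set, and (p_x)_{x∈X} a family of nonzero orthogonal projections in B(H) with p_x p_y = 0 for x ≠ y and ∑_{x∈X} p_x ξ = ξ (as an unconditional sum) for every ξ ∈ H. Then there exists an operator V ∈ B(H) with ‖T − V‖ ≥ 1 for every k ∈ ℕ and every T ∈ S_k; in particular, the norm closure of ⋃_{k≥1} S_k is a proper subset of B(H). -/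
/-- For `k : ℕ`, `blockSparse p k` is the set of operators `T ∈ B(H)` such that for every
`x ∈ X` the set `{y : X | p y * T * p x ≠ 0}` has at most `k` elements, and for every
`y ∈ X` the set `{x : X | p y * T * p x ≠ 0}` has at most `k` elements. -/
def blockSparse {H : Type*} [NormedAddCommGroup H] [InnerProductSpace ℂ H]
    {X : Type*} (p : X → (H →L[ℂ] H)) (k : ℕ) : Set (H →L[ℂ] H) :=
  {T | (∀ x : X, Cardinal.mk {y : X | p y * T * p x ≠ 0} ≤ k) ∧
       (∀ y : X, Cardinal.mk {x : X | p y * T * p x ≠ 0} ≤ k)}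

/-!
Choose a unit vector `u x` in the range of each `p x`, pairwise disjoint finite sets `s n ⊆ X` with
`#(s n) = n + 1`, and distinct points `x n ∈ X`. Let `V` send `u (x n)` to the unit vector that is
spread evenly over `{u y | y ∈ s n}`; it is bounded because these images are orthonormal. If the
column `x n` of `T` has at most `k` nonzero blocks, then `T (u (x n))` misses at least `n + 1 - k`
of the coordinates `y ∈ s n`, each of which carries mass `1 / (n + 1)` of `V (u (x n))`. By Bessel,
`‖T - V‖ ^ 2 ≥ 1 - k / (n + 1)` for every `n`.
-/

section

open Finset Function

variable {𝕜 E F ι κ : Type*} [RCLike 𝕜]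
  [NormedAddCommGroup E] [InnerProductSpace 𝕜 E] [NormedAddCommGroup F] [InnerProductSpace 𝕜 F]

theorem exists_pairwise_disjoint_finset_card_eq (α : Type*) [Infinite α] (c : ℕ → ℕ) :
    ∃ s : ℕ → Finset α, Pairwise (Disjoint on s) ∧ ∀ n, #(s n) = c n := by
  let f : ℕ × ℕ ↪ α := Nat.pairEquiv.toEmbedding.trans (Infinite.natEmbedding α)
  refine ⟨fun n ↦ (({n} : Finset ℕ) ×ˢ range (c n)).map f, fun m n hmn ↦ ?_, fun n ↦ by simp⟩
  exact (disjoint_map f).2 (disjoint_product.2 (.inl (by simpa using hmn)))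

theorem card_le_card_filter_not_add_of_mk_le {s : Finset ι} {P : ι → Prop} [DecidablePred P]
    {k : ℕ} (hP : Cardinal.mk {i | P i} ≤ k) : #s ≤ #{i ∈ s | ¬P i} + k := by
  have hsub : (({i ∈ s | P i} : Finset ι) : Set ι) ⊆ {i | P i} := fun i hi ↦ (mem_filter.1 hi).2
  have hle : #{i ∈ s | P i} ≤ k := by simpa using (Cardinal.mk_le_mk_of_subset hsub).trans hP
  have hsplit : #{i ∈ s | P i} + #{i ∈ s | ¬P i} = #s := card_filter_add_card_filter_not P
  lia

theorem exists_norm_eq_one_apply_eq_self_of_isIdempotentElem {G : Type*} [NormedAddCommGroup G]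
    [NormedSpace 𝕜 G] {p : G →L[𝕜] G} (hp : IsIdempotentElem p) (hp0 : p ≠ 0) :
    ∃ u : G, ‖u‖ = 1 ∧ p u = u := by
  obtain ⟨v, hv⟩ : ∃ v, p v ≠ 0 := by simpa using DFunLike.ne_iff.1 hp0
  have hpv : p (p v) = p v := DFunLike.congr_fun hp.eq v
  exact ⟨(‖p v‖ : 𝕜)⁻¹ • p v, norm_smul_inv_norm hv, by rw [map_smul, hpv]⟩

theorem inner_apply_eq_zero_of_mul_mul_eq_zero [CompleteSpace E] {p q T : E →L[𝕜] E} {u v : E}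
    (hq : IsSelfAdjoint q) (hqv : q v = v) (hpu : p u = u) (h : q * T * p = 0) :
    inner 𝕜 v (T u) = 0 := by
  calc
    inner 𝕜 v (T u) = inner 𝕜 (q v) (T (p u)) := by rw [hqv, hpu]
    _ = inner 𝕜 v ((q * T * p) u) := hq.isSymmetric _ _
    _ = 0 := by rw [h, zero_apply, inner_zero_right]

theorem orthonormal_of_pairwise_mul_eq_zero [CompleteSpace E] {p : ι → E →L[𝕜] E} {u : ι → E}
    (hsa : ∀ i, IsSelfAdjoint (p i)) (horth : Pairwise fun i j ↦ p i * p j = 0)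
    (hu : ∀ i, ‖u i‖ = 1) (hpu : ∀ i, p i (u i) = u i) : Orthonormal 𝕜 u := by
  refine ⟨hu, fun i j hij ↦ ?_⟩
  have hmul : p i * 1 * p j = 0 := by rw [mul_one, horth hij]
  exact inner_apply_eq_zero_of_mul_mul_eq_zero (T := 1) (hsa i) (hpu i) (hpu j) hmul

theorem exists_continuousLinearMap_apply_eq_of_orthonormal [CompleteSpace E] [CompleteSpace F]
    {a : ι → E} {b : ι → F} (ha : Orthonormal 𝕜 a) (hb : Orthonormal 𝕜 b) :
    ∃ V : E →L[𝕜] F, ∀ i, V (a i) = b i := by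
  classical
  let A := ha.orthogonalFamily.linearIsometry
  let B := hb.orthogonalFamily.linearIsometry
  have hA (i : ι) : A (lp.single 2 i 1) = a i :=
    (ha.orthogonalFamily.linearIsometry_apply_single 1).trans (one_smul 𝕜 (a i))
  have hB (i : ι) : B (lp.single 2 i 1) = b i :=
    (hb.orthogonalFamily.linearIsometry_apply_single 1).trans (one_smul 𝕜 (b i))
  have hAA := A.toContinuousLinearMap.norm_map_iff_adjoint_comp_self.1 A.norm_map
  refine ⟨B.toContinuousLinearMap ∘L A.toContinuousLinearMap.adjoint, fun i ↦ ?_⟩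
  calc
    B (A.toContinuousLinearMap.adjoint (a i))
      = B ((A.toContinuousLinearMap.adjoint ∘L A.toContinuousLinearMap) (lp.single 2 i 1)) := by
        rw [← hA i]; rfl
    _ = b i := by rw [hAA, one_apply_eq_self, hB]

variable (𝕜) in
/-- The sum of the `v i`, `i ∈ s`, divided by `√#s`: a unit vector when `v` is orthonormal and `s`
is nonempty, and `0` when `s` is empty. -/
noncomputable def normalizedSum (v : ι → E) (s : Finset ι) : E :=
  ((√(#s) : ℝ) : 𝕜)⁻¹ • ∑ i ∈ s, v i

theorem inner_normalizedSum_of_mem {v : ι → E} (hv : Orthonormal 𝕜 v) {s : Finset ι} {i : ι}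
    (hi : i ∈ s) : inner 𝕜 (v i) (normalizedSum 𝕜 v s) = ((√(#s) : ℝ) : 𝕜)⁻¹ := by
  classical
  simp [normalizedSum, inner_smul_right, inner_sum, orthonormal_iff_ite.1 hv, hi]

theorem inner_normalizedSum_of_notMem {v : ι → E} (hv : Orthonormal 𝕜 v) {s : Finset ι} {i : ι}
    (hi : i ∉ s) : inner 𝕜 (v i) (normalizedSum 𝕜 v s) = 0 := by
  classical
  simp [normalizedSum, inner_smul_right, inner_sum, orthonormal_iff_ite.1 hv, hi]

theorem norm_normalizedSum {v : ι → E} (hv : Orthonormal 𝕜 v) {s : Finset ι} (hs : s.Nonempty) :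
    ‖normalizedSum 𝕜 v s‖ = 1 := by
  have hsum : ‖∑ i ∈ s, v i‖ ^ 2 = #s := by
    have hinner := hv.inner_sum (fun _ ↦ 1) (fun _ ↦ 1) s
    simp only [one_smul, map_one, mul_one, sum_const, nsmul_eq_mul,
      inner_self_eq_norm_sq_to_K] at hinner
    exact_mod_cast hinner
  have hsqrt : ‖∑ i ∈ s, v i‖ = √(#s : ℝ) := by rw [← hsum, Real.sqrt_sq (norm_nonneg _)]
  have hne : √(#s : ℝ) ≠ 0 := Real.sqrt_ne_zero'.2 (by exact_mod_cast hs.card_pos)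
  rw [normalizedSum, norm_smul, norm_inv, RCLike.norm_ofReal, abs_of_nonneg (Real.sqrt_nonneg _),
    hsqrt, inv_mul_cancel₀ hne]

theorem orthonormal_normalizedSum {v : ι → E} (hv : Orthonormal 𝕜 v) {s : κ → Finset ι}
    (hs : ∀ m, (s m).Nonempty) (hdisj : Pairwise (Disjoint on s)) :
    Orthonormal 𝕜 fun m ↦ normalizedSum 𝕜 v (s m) := by
  refine ⟨fun m ↦ norm_normalizedSum hv (hs m), fun m n hmn ↦ ?_⟩
  change inner 𝕜 (((√(#(s m)) : ℝ) : 𝕜)⁻¹ • ∑ i ∈ s m, v i) (normalizedSum 𝕜 v (s n)) = 0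
  rw [inner_smul_left, sum_inner, sum_eq_zero, mul_zero]
  exact fun i hi ↦ inner_normalizedSum_of_notMem hv (disjoint_left.1 (hdisj hmn) hi)

theorem card_sub_le_card_mul_norm_sub_normalizedSum_sq {v : ι → E} (hv : Orthonormal 𝕜 v)
    {s : Finset ι} {k : ℕ} {w : E} (hw : Cardinal.mk {i | inner 𝕜 (v i) w ≠ 0} ≤ k) :
    (#s - k : ℝ) ≤ #s * ‖w - normalizedSum 𝕜 v s‖ ^ 2 := by
  classical
  obtain rfl | hs := s.eq_empty_or_nonempty
  · simp
  have hs0 : (0 : ℝ) < #s := by exact_mod_cast hs.card_pos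
  let Z := {i ∈ s | ¬inner 𝕜 (v i) w ≠ 0}
  have hcard : (#s : ℝ) ≤ #Z + k := by exact_mod_cast card_le_card_filter_not_add_of_mk_le hw
  have hcoeff : ∀ i ∈ Z, ‖inner 𝕜 (v i) (w - normalizedSum 𝕜 v s)‖ ^ 2 = (#s : ℝ)⁻¹ := by
    intro i hi
    obtain ⟨his, hiw⟩ := mem_filter.1 hi
    rw [inner_sub_right, not_not.1 hiw, inner_normalizedSum_of_mem hv his, zero_sub, norm_neg,
      norm_inv, RCLike.norm_ofReal, abs_of_nonneg (Real.sqrt_nonneg _),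
      inv_pow, Real.sq_sqrt hs0.le]
  calc
    (#s - k : ℝ) ≤ #Z := by linarith
    _ = #s * ∑ i ∈ Z, ‖inner 𝕜 (v i) (w - normalizedSum 𝕜 v s)‖ ^ 2 := by
      rw [sum_congr rfl hcoeff, sum_const, nsmul_eq_mul]; field_simp
    _ ≤ #s * ‖w - normalizedSum 𝕜 v s‖ ^ 2 := by
      gcongr; exact hv.sum_inner_products_le _

theorem one_le_of_forall_succ_sub_le_succ_mul {b c : ℝ}
    (h : ∀ n : ℕ, (n + 1 : ℝ) - b ≤ (n + 1) * c) : 1 ≤ c := by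
  by_contra! hc
  obtain ⟨n, hn⟩ := exists_nat_gt (b / (1 - c))
  rw [div_lt_iff₀ (sub_pos.2 hc)] at hn
  linarith [h n]

theorem exists_one_le_norm_sub_of_sparse_columns [CompleteSpace E] [CompleteSpace F]
    [Infinite ι] [Infinite κ] {a : ι → E} {v : κ → F}
    (ha : Orthonormal 𝕜 a) (hv : Orthonormal 𝕜 v) :
    ∃ V : E →L[𝕜] F, ∀ (k : ℕ) (T : E →L[𝕜] F),
      (∀ i, Cardinal.mk {j | inner 𝕜 (v j) (T (a i)) ≠ 0} ≤ k) → 1 ≤ ‖T - V‖ := by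
  obtain ⟨s, hdisj, hcard⟩ := exists_pairwise_disjoint_finset_card_eq κ (· + 1)
  have hne (n : ℕ) : (s n).Nonempty := card_pos.1 (by simp [hcard])
  let e := Infinite.natEmbedding ι
  obtain ⟨V, hV⟩ := exists_continuousLinearMap_apply_eq_of_orthonormal
    (ha.comp e e.injective) (orthonormal_normalizedSum hv hne hdisj)
  refine ⟨V, fun k T hT ↦ ?_⟩
  have hbound (n : ℕ) : (n + 1 : ℝ) - k ≤ (n + 1) * ‖T - V‖ ^ 2 := by
    have hnorm : ‖T (a (e n)) - normalizedSum 𝕜 v (s n)‖ ≤ ‖T - V‖ := by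
      simpa [← hV, ha.norm_eq_one] using (T - V).le_opNorm (a (e n))
    have hbessel := card_sub_le_card_mul_norm_sub_normalizedSum_sq hv (s := s n) (hT (e n))
    rw [hcard, Nat.cast_succ] at hbessel
    exact hbessel.trans (by gcongr)
  exact (one_le_sq_iff₀ (norm_nonneg _)).1 (one_le_of_forall_succ_sub_le_succ_mul hbound)

/-- The operators each of whose columns, in the block decomposition given by `p`, has at most `k`
nonzero blocks; rows are unrestricted, so this contains `blockSparse p k`. -/
def columnSparse (p : ι → E →L[𝕜] E) (k : ℕ) : Set (E →L[𝕜] E) :=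
  {T | ∀ x, Cardinal.mk {y | p y * T * p x ≠ 0} ≤ k}

theorem closure_ne_univ_of_forall_le_norm_sub {G : Type*} [SeminormedAddCommGroup G] {S : Set G}
    {v : G} {r : ℝ} (hr : 0 < r) (hS : ∀ t ∈ S, r ≤ ‖t - v‖) : closure S ≠ Set.univ := by
  intro hcl
  obtain ⟨t, ht, hdist⟩ := Metric.mem_closure_iff.1 (hcl ▸ Set.mem_univ v) r hr
  rw [dist_comm, dist_eq_norm] at hdist
  exact (hS t ht).not_gt hdist

theorem exists_operator_far_from_blockSparse_general [CompleteSpace E] [Infinite ι]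
    (p : ι → E →L[𝕜] E) (hnz : ∀ x, p x ≠ 0) (hp : ∀ x, IsStarProjection (p x))
    (horth : Pairwise fun x y ↦ p x * p y = 0) :
    ∃ V : E →L[𝕜] E, (∀ k, ∀ T ∈ columnSparse p k, 1 ≤ ‖T - V‖) ∧
      closure (⋃ k, columnSparse p k) ≠ Set.univ := by
  choose u hu hpu using fun x ↦
    exists_norm_eq_one_apply_eq_self_of_isIdempotentElem (hp x).isIdempotentElem (hnz x)
  have hon : Orthonormal 𝕜 u :=
    orthonormal_of_pairwise_mul_eq_zero (fun x ↦ (hp x).isSelfAdjoint) horth hu hpu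
  obtain ⟨V, hV⟩ := exists_one_le_norm_sub_of_sparse_columns hon hon
  have hfar (k : ℕ) (T : E →L[𝕜] E) (hT : T ∈ columnSparse p k) : 1 ≤ ‖T - V‖ := by
    refine hV k T fun x ↦ (Cardinal.mk_le_mk_of_subset fun y ↦ mt ?_).trans (hT x)
    exact inner_apply_eq_zero_of_mul_mul_eq_zero (hp y).isSelfAdjoint (hpu y) (hpu x)
  refine ⟨V, hfar, closure_ne_univ_of_forall_le_norm_sub (v := V) one_pos fun T hT ↦ ?_⟩
  obtain ⟨k, hk⟩ := Set.mem_iUnion.1 hT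
  exact hfar k T hk

end

/-- if `X` is infinite and the projections `p_x` are nonzero, pairwise
orthogonal and complete, then there exists `V ∈ B(H)` with `‖T - V‖ ≥ 1` for every `k` and
every `T ∈ S_k`; in particular the norm closure of `⋃_{k ≥ 1} S_k` is a proper subset of
`B(H)`. -/
theorem exists_operator_far_from_blockSparse
    {H : Type*} [NormedAddCommGroup H] [InnerProductSpace ℂ H] [CompleteSpace H]
    {X : Type*} [Infinite X] (p : X → (H →L[ℂ] H))
    (hnz : ∀ x, p x ≠ 0)
    (hsa : ∀ x, IsSelfAdjoint (p x))
    (hidem : ∀ x, IsIdempotentElem (p x))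
    (horth : ∀ x y, x ≠ y → p x * p y = 0)
    (hcomplete : ∀ ξ : H, HasSum (fun x => p x ξ) ξ) :
    ∃ V : H →L[ℂ] H,
      (∀ k : ℕ, ∀ T ∈ blockSparse p k, 1 ≤ ‖T - V‖) ∧
      closure (⋃ k ∈ Set.Ici 1, blockSparse p k) ≠ (Set.univ : Set (H →L[ℂ] H)) := by
  obtain ⟨V, hfar, hcl⟩ := exists_operator_far_from_blockSparse_general p hnz
    (fun x ↦ ⟨hidem x, hsa x⟩) horth
  exact ⟨V, fun k T hT ↦ hfar k T hT.1, fun h ↦ hcl <| Set.univ_subset_iff.1 <| h ▸ closure_mono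
    (Set.iUnion_mono fun k ↦ Set.iUnion_subset fun _ T hT ↦ hT.1)⟩
end
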